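/- arXiv:2601.03208 — 2 statements merged into one kernel-verified Lean document; each statement's English description precedes it below -/
import Mathlib

section
/- Let I be a monomial ideal of R = K[x_1,…,x_n] of height at least 2. Then R/I is Cohen–Macaulay if and only if R/sgn(I) is Cohen–Macaulay. -/
open MvPolynomial

/-- The monomial ideal of `R = K[x_1,…,x_n]` generated by the monomials `x^{v j}`,
`j = 1, …, q`, with exponent vectors `v j ∈ ℕ^n`. -/
noncomputable def monIdeal (K : Type) [Field K] {n q : ℕ} (v : Fin q → Fin n →₀ ℕ) :
    Ideal (MvPolynomial (Fin n) K) :=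
  Ideal.span (Set.range fun j => monomial (v j) (1 : K))

/-- The exponent vectors `v j` are pairwise non-comparable in the componentwise order,
i.e. the corresponding monomials form an anti-chain under divisibility.  Equivalently,
`{x^{v j}}` is the (unique) minimal monomial generating set `G(I)` of the monomial ideal
`I` it generates. -/
def AntichainFam {n q : ℕ} (v : Fin q → Fin n →₀ ℕ) : Prop :=
  ∀ j k : Fin q, v j ≤ v k → j = k

/-- The signature of the family `v` of exponent vectors (the columns of the incidence
matrix `A`): for each row `i`, the `(i,j)` entry of the signature matrix is the position
of `A i j = v j i` in the ascending list of the distinct entries of the `i`-th row of `A`,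
i.e. the number of distinct values in row `i` that are strictly smaller than `v j i`.
The columns of the resulting matrix are the exponent vectors of the generators of the
signature ideal `sgn(I) = monIdeal K (sgnExp v)`. -/
noncomputable def sgnExp {n q : ℕ} (v : Fin q → Fin n →₀ ℕ) : Fin q → Fin n →₀ ℕ :=
  fun j => Finsupp.equivFunOnFinite.symm fun i =>
    ((Finset.univ.image fun k : Fin q => v k i).filter fun m => m < v j i).card

/-- The graded maximal ideal `(x_1, …, x_n)` of `K[x_1,…,x_n]`. -/
noncomputable def mIdeal (K : Type) [Field K] (n : ℕ) : Ideal (MvPolynomial (Fin n) K) :=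
  Ideal.span (Set.range (X : Fin n → MvPolynomial (Fin n) K))

/-- The depth of `R/I` with respect to the maximal ideal `(x_1, …, x_n)`: the largest
length of an `R/I`-regular sequence consisting of elements of `(x_1, …, x_n)`. -/
noncomputable def depthQuot (K : Type) [Field K] (n : ℕ)
    (I : Ideal (MvPolynomial (Fin n) K)) : ℕ :=
  sSup { k : ℕ | ∃ rs : List (MvPolynomial (Fin n) K), rs.length = k ∧
    (∀ r ∈ rs, r ∈ mIdeal K n) ∧
    RingTheory.Sequence.IsRegular (MvPolynomial (Fin n) K ⧸ I) rs }

/-- The height (codimension) of an ideal: the infimum of the heights of the prime ideals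
containing it, where the height of a prime is the supremum of the lengths of chains of
primes descending from it. -/
noncomputable def heightOf {R : Type*} [CommRing R] (I : Ideal R) : ℕ∞ :=
  ⨅ p ∈ { p : PrimeSpectrum R | I ≤ p.asIdeal }, Order.height p

/-- `R/I` is Cohen–Macaulay: its depth equals its Krull dimension. -/
noncomputable def cmQuot (K : Type) [Field K] (n : ℕ)
    (I : Ideal (MvPolynomial (Fin n) K)) : Prop :=
  ((depthQuot K n I : ℕ∞) : WithBot ℕ∞) = ringKrullDim (MvPolynomial (Fin n) K ⧸ I)


/-- `x` is a nonzerodivisor modulo `I`. -/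
def NZ {R : Type*} [CommRing R] (I : Ideal R) (x : R) : Prop := ∀ r, x * r ∈ I → r ∈ I

/-- existence of a weakly regular sequence of length `k` in `m` on `R/I`. -/
def DP {R : Type*} [CommRing R] (m : Ideal R) : ℕ → Ideal R → Prop
  | 0, _ => True
  | k + 1, I => ∃ x ∈ m, NZ I x ∧ DP m k (I ⊔ Ideal.span {x})

theorem mem_sup_sp {R : Type*} [CommRing R] {I : Ideal R} {x r : R} :
    r ∈ I ⊔ Ideal.span {x} ↔ ∃ s, r - x * s ∈ I := by
  rw [Submodule.mem_sup]
  constructor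
  · rintro ⟨a, ha, b, hb, rfl⟩
    obtain ⟨s, rfl⟩ := Ideal.mem_span_singleton'.1 hb
    exact ⟨s, by convert ha using 1; ring⟩
  · rintro ⟨s, hs⟩
    exact ⟨_, hs, x * s, Ideal.mem_span_singleton.2 ⟨s, rfl⟩, by ring⟩

theorem nz_avoid1 {R : Type*} [CommRing R] [IsNoetherianRing R] (J : Ideal R) :
    ∃ s : Set (Ideal R), s.Finite ∧ (∀ p ∈ s, p.IsPrime ∧ ∃ e, e ∉ J ∧ ∀ z ∈ p, z * e ∈ J) ∧
      ∀ z, (∀ p ∈ s, z ∉ p) → NZ J z := by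
  refine ⟨associatedPrimes R (R ⧸ J), associatedPrimes.finite R _, ?_, ?_⟩
  · intro p hp
    obtain ⟨hp1, x, hx⟩ := isAssociatedPrime_iff.1 hp
    refine ⟨hp1, ?_⟩
    obtain ⟨e, rfl⟩ := Ideal.Quotient.mk_surjective x
    have key : ∀ z, z ∈ p ↔ z * e ∈ J := by
      intro z
      rw [hx, Submodule.mem_colon_singleton, Submodule.mem_bot, Algebra.smul_def,
        Ideal.Quotient.algebraMap_eq, ← map_mul, Ideal.Quotient.eq_zero_iff_mem]
    refine ⟨e, fun he => hp1.ne_top ((Ideal.eq_top_iff_one _).2 ((key 1).2 (by simpa using he))),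
      fun z hz => (key z).1 hz⟩
  · intro z hz r hr
    by_contra hrJ
    have h0 : (Ideal.Quotient.mk J r) ≠ 0 := fun h => hrJ (Ideal.Quotient.eq_zero_iff_mem.1 h)
    obtain ⟨P, hP, hle⟩ := exists_le_isAssociatedPrime_of_isNoetherianRing R _ h0
    refine hz P hP (hle ?_)
    rw [Submodule.mem_colon_singleton, Submodule.mem_bot, Algebra.smul_def,
        Ideal.Quotient.algebraMap_eq, ← map_mul, Ideal.Quotient.eq_zero_iff_mem]
    exact hr

theorem nz_avoid {R : Type*} [CommRing R] [IsNoetherianRing R] (m J1 J2 : Ideal R)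
    (h1 : ∀ e, (∀ z ∈ m, z * e ∈ J1) → e ∈ J1) (h2 : ∀ e, (∀ z ∈ m, z * e ∈ J2) → e ∈ J2) :
    ∃ z ∈ m, NZ J1 z ∧ NZ J2 z := by
  obtain ⟨s1, f1, p1, n1⟩ := nz_avoid1 J1
  obtain ⟨s2, f2, p2, n2⟩ := nz_avoid1 J2
  by_contra hcon
  have hsub : (m : Set R) ⊆ ⋃ p ∈ s1 ∪ s2, ((id p : Ideal R) : Set R) := by
    intro z hz
    by_contra hz'
    simp only [Set.mem_iUnion, not_exists, id] at hz'
    exact hcon ⟨z, hz, n1 z fun p hp => hz' p (Or.inl hp), n2 z fun p hp => hz' p (Or.inr hp)⟩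
  obtain ⟨p, hp, hmp⟩ := (Ideal.subset_union_prime_finite (f1.union f2) (f := id) 0 0
    (fun p hp _ _ => hp.elim (fun h => (p1 p h).1) (fun h => (p2 p h).1))).1 hsub
  rcases hp with hp | hp
  · obtain ⟨e, he, hz⟩ := (p1 p hp).2
    exact he (h1 e fun z hzm => hz z (hmp hzm))
  · obtain ⟨e, he, hz⟩ := (p2 p hp).2
    exact he (h2 e fun z hzm => hz z (hmp hzm))

theorem nz_swap {R : Type*} [CommRing R] {J : Ideal R} {y z : R} (hy : NZ J y)
    (hz : NZ (J ⊔ Ideal.span {y}) z) : NZ (J ⊔ Ideal.span {z}) y := by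
  intro e he
  obtain ⟨f, hf⟩ := mem_sup_sp.1 he
  have : z * f ∈ J ⊔ Ideal.span {y} := mem_sup_sp.2 ⟨e, by
    have := J.neg_mem hf
    convert this using 1; ring⟩
  obtain ⟨g, hg⟩ := mem_sup_sp.1 (hz _ this)
  refine mem_sup_sp.2 ⟨g, hy _ ?_⟩
  have := J.add_mem hf (J.mul_mem_left z hg)
  convert this using 1; ring

theorem DP_exch {R : Type*} [CommRing R] [IsNoetherianRing R] (m : Ideal R) (k : ℕ) :
    ∀ (J : Ideal R) (x : R), x ∈ m → NZ J x → DP m (k + 1) J → DP m k (J ⊔ Ideal.span {x}) := by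
  induction k with
  | zero => intros; trivial
  | succ k ih =>
    rintro J x hx hJx ⟨y, hy, hJy, hP⟩
    have h2 : ∀ e, (∀ z ∈ m, z * e ∈ J ⊔ Ideal.span {y}) → e ∈ J ⊔ Ideal.span {y} := by
      intro e he
      obtain ⟨w, hw, hn, -⟩ := hP
      exact hn e (he w hw)
    have h1 : ∀ e, (∀ z ∈ m, z * e ∈ J ⊔ Ideal.span {x}) → e ∈ J ⊔ Ideal.span {x} := by
      intro e he
      obtain ⟨e', he'⟩ := mem_sup_sp.1 (he y hy)
      have : e' ∈ J ⊔ Ideal.span {y} := by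
        refine h2 _ fun z hz => ?_
        obtain ⟨s, hs⟩ := mem_sup_sp.1 (he z hz)
        refine mem_sup_sp.2 ⟨s, hJx _ ?_⟩
        have := J.sub_mem (J.mul_mem_left y hs) (J.mul_mem_left z he')
        convert this using 1; ring
      obtain ⟨g, hg⟩ := mem_sup_sp.1 this
      refine mem_sup_sp.2 ⟨g, hJy _ ?_⟩
      have := J.add_mem he' (J.mul_mem_left x hg)
      convert this using 1; ring
    obtain ⟨z, hz, hzx, hzy⟩ := nz_avoid m _ _ h1 h2
    have hc : ∀ a b : R, J ⊔ Ideal.span {a} ⊔ Ideal.span {b} = J ⊔ Ideal.span {b} ⊔ Ideal.span {a} :=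
      fun a b => sup_right_comm _ _ _
    refine ⟨z, hz, hzx, ?_⟩
    rw [hc]
    refine ih _ _ hx (nz_swap hJx hzx) ⟨y, hy, nz_swap hJy hzy, ?_⟩
    rw [hc]
    exact ih _ _ hz hzy hP

theorem DP_comap {R S : Type*} [CommRing R] [CommRing S] (π : S →+* R)
    (hπ : Function.Surjective π) (m : Ideal R) (k : ℕ) :
    ∀ I : Ideal R, DP (m.comap π) k (I.comap π) ↔ DP m k I := by
  induction k with
  | zero => intro I; exact Iff.rfl
  | succ k ih =>
    intro I
    have key : ∀ z, I.comap π ⊔ Ideal.span {z} = (I ⊔ Ideal.span {π z}).comap π := by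
      intro z
      ext r
      rw [mem_sup_sp, Ideal.mem_comap, mem_sup_sp, hπ.exists]
      simp
    have key2 : ∀ z, NZ (I.comap π) z ↔ NZ I (π z) := by
      intro z
      unfold NZ
      rw [hπ.forall]
      simp
    simp only [DP, key, ih, key2]
    rw [hπ.exists]
    simp

namespace Polynomial

theorem mem_map_expand {R : Type*} [CommRing R] (J : Ideal R[X]) (s : R[X]) :
    s ∈ J.map (expand R 2 : R[X] →+* R[X]) ↔ contract 2 s ∈ J ∧ contract 2 (divX s) ∈ J := by
  have hd : ∀ s : R[X], s = expand R 2 (contract 2 s) + X * expand R 2 (contract 2 (divX s)) := by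
    intro s
    ext b
    rw [coeff_add]
    rcases Nat.even_or_odd' b with ⟨c, rfl | rfl⟩
    · rw [mul_comm, coeff_expand_mul (by norm_num), coeff_contract (by norm_num)]
      rcases c with _ | c
      · simp
      · rw [show (c + 1) * 2 = (c * 2 + 1) + 1 by ring, coeff_X_mul, coeff_expand (by norm_num),
          if_neg (by omega)]; simp
    · rw [coeff_X_mul, mul_comm, coeff_expand_mul (by norm_num), coeff_contract (by norm_num),
        coeff_expand (by norm_num), if_neg (by omega), coeff_divX]; simp
  constructor
  · intro hs
    refine Submodule.span_induction ?_ ?_ ?_ ?_ hs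
    · rintro _ ⟨f, hf, rfl⟩
      refine ⟨by simpa [contract_expand] using hf, ?_⟩
      have : contract 2 (divX (expand R 2 f)) = 0 := by
        ext b
        rw [coeff_contract (by norm_num), coeff_divX, coeff_expand (by norm_num),
          if_neg (by omega)]; simp
      simp [this]
    · simp [contract]
    · rintro a b - - ⟨h1, h2⟩ ⟨h3, h4⟩
      rw [divX_add, contract_add (by norm_num), contract_add (by norm_num)]
      exact ⟨J.add_mem h1 h3, J.add_mem h2 h4⟩
    · rintro a b - ⟨h1, h2⟩
      set A := contract 2 a
      set A' := contract 2 (divX a)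
      set B := contract 2 b
      set B' := contract 2 (divX b)
      have e1 : a • b = expand R 2 (A * B + X * (A' * B')) + X * expand R 2 (A * B' + A' * B) := by
        rw [smul_eq_mul, hd a, hd b]
        simp only [map_add, map_mul, expand_X]
        ring
      have c1 : ∀ f g : R[X], contract 2 (expand R 2 f + X * expand R 2 g) = f := by
        intro f g
        ext b
        rw [contract_add (by norm_num), contract_expand 2 (by norm_num), coeff_add,
          coeff_contract (by norm_num)]
        rcases b with _ | b
        · simp
        · rw [show (b + 1) * 2 = (b * 2 + 1) + 1 by ring, coeff_X_mul, coeff_expand (by norm_num),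
            if_neg (by omega)]; simp
      have c2 : ∀ f g : R[X], contract 2 (divX (expand R 2 f + X * expand R 2 g)) = g := by
        intro f g
        ext b
        rw [coeff_contract (by norm_num), coeff_divX, coeff_add, coeff_X_mul,
          coeff_expand_mul (by norm_num), coeff_expand (by norm_num), if_neg (by omega)]; simp
      rw [e1, c1, c2]
      exact ⟨J.add_mem (J.mul_mem_left _ h1) (J.mul_mem_left _ (J.mul_mem_left _ h2)),
        J.add_mem (J.mul_mem_left _ h2) (J.mul_mem_left _ h1)⟩
  · rintro ⟨h1, h2⟩
    rw [hd s]
    exact Ideal.add_mem _ (Ideal.mem_map_of_mem _ h1)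
      (Ideal.mul_mem_left _ _ (Ideal.mem_map_of_mem _ h2))

theorem divX_X_mul' {R : Type*} [CommRing R] (f : R[X]) : divX (X * f) = f := by
  ext b
  rw [coeff_divX, coeff_X_mul]

theorem DP_expand {R : Type*} [CommRing R] [IsNoetherianRing R] (m : Ideal R) (k : ℕ) :
    ∀ J : Ideal R[X], DP (m.comap constantCoeff) k (J.map (expand R 2 : R[X] →+* R[X])) ↔
      DP (m.comap constantCoeff) k J := by
  have hc : ∀ f g : R[X], contract 2 (f * expand R 2 g) = contract 2 f * g :=
    fun f g => contract_mul_expand (by norm_num) f g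
  have hX : ∀ f g : R[X], contract 2 (divX (expand R 2 f * g)) = f * contract 2 (divX g) := by
    intro f g
    have h1 : divX (expand R 2 f * g) = divX (C ((expand R 2 f).coeff 0 * g.coeff 0)
        + X * (divX g * expand R 2 f + C (g.coeff 0) * divX (expand R 2 f))) := by
      congr 1
      rw [C_mul]
      linear_combination (-expand R 2 f) * divX_mul_X_add g
        - C (g.coeff 0) * divX_mul_X_add (expand R 2 f)
    have h2 : contract 2 (divX (expand R 2 f)) = 0 := by
      ext b
      rw [coeff_contract (by norm_num), coeff_divX, coeff_expand (by norm_num),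
        if_neg (by omega)]; simp
    have h3 : ∀ a : R, contract 2 (C a * divX (expand R 2 f)) = 0 := by
      intro a
      ext b
      rw [coeff_contract (by norm_num), coeff_C_mul, coeff_divX, coeff_expand (by norm_num),
        if_neg (by omega)]; simp
    rw [h1, divX_add, divX_C, zero_add, divX_X_mul', contract_add (by norm_num), hc, h3,
      add_zero, mul_comm]
  have hnz : ∀ (J : Ideal R[X]) z, NZ J z →
      NZ (J.map (expand R 2 : R[X] →+* R[X])) (expand R 2 z) := by
    intro J z hz r hr
    rw [mem_map_expand] at hr ⊢
    refine ⟨hz _ ?_, hz _ ?_⟩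
    · rw [mul_comm, ← hc, mul_comm]; exact hr.1
    · rw [← hX]; exact hr.2
  have hmap : ∀ (J : Ideal R[X]) z, J.map (expand R 2 : R[X] →+* R[X]) ⊔ Ideal.span {expand R 2 z}
      = (J ⊔ Ideal.span {z}).map (expand R 2 : R[X] →+* R[X]) := by
    intro J z
    rw [Ideal.map_sup, Ideal.map_span]; simp
  have hm : ∀ z, z ∈ m.comap (constantCoeff (R := R)) →
      expand R 2 z ∈ m.comap (constantCoeff (R := R)) := by
    intro z hz
    simpa [Ideal.mem_comap, constantCoeff_apply, coeff_expand] using hz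
  induction k with
  | zero => intro J; exact Iff.rfl
  | succ k ih =>
    intro J
    constructor
    · intro h
      have hex : ∀ e, (∀ z ∈ m.comap (constantCoeff (R := R)), z * e ∈ J) → e ∈ J := by
        intro e he
        obtain ⟨w, hw, hn, -⟩ := h
        have : X * expand R 2 e ∈ J.map (expand R 2 : R[X] →+* R[X]) := by
          apply hn
          rw [← divX_mul_X_add w]
          have e1 : (divX w * X + C (w.coeff 0)) * (X * expand R 2 e) =
            divX w * expand R 2 (X * e) + X * expand R 2 (C (w.coeff 0) * e) := by
            simp only [map_mul, expand_X, expand_C]; ring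
          rw [e1]
          refine Ideal.add_mem _ (Ideal.mul_mem_left _ _ (Ideal.mem_map_of_mem
            (expand R 2 : R[X] →+* R[X]) (he _ (by simp)))) (Ideal.mul_mem_left _ _ (Ideal.mem_map_of_mem
            (expand R 2 : R[X] →+* R[X]) (he _ ?_)))
          simpa using hw
        have := ((mem_map_expand _ _).1 this).2
        rwa [divX_X_mul', contract_expand 2 (by norm_num)] at this
      obtain ⟨z, hz, hzJ, -⟩ := nz_avoid _ J J hex hex
      have := DP_exch _ _ _ _ (hm z hz) (hnz _ _ hzJ) h
      rw [hmap, ih] at this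
      exact ⟨z, hz, hzJ, this⟩
    · rintro ⟨z, hz, hzJ, h⟩
      refine ⟨_, hm z hz, hnz _ _ hzJ, ?_⟩
      rw [hmap, ih]
      exact h

/-- coefficientwise ideal `L + y^c (L + H)` in `R[y]`. -/
def jI {R : Type*} [CommRing R] (L H : Ideal R) (c : ℕ) : Ideal R[X] where
  carrier := {f | (∀ b < c, f.coeff b ∈ L) ∧ ∀ b, f.coeff b ∈ L ⊔ H}
  add_mem' := by
    rintro f g ⟨h1, h2⟩ ⟨h3, h4⟩
    simp only [Set.mem_ofPred_eq, coeff_add]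
    exact ⟨fun b hb => L.add_mem (h1 b hb) (h3 b hb), fun b => Ideal.add_mem _ (h2 b) (h4 b)⟩
  zero_mem' := by simp
  smul_mem' := by
    rintro f g ⟨h1, h2⟩
    simp only [Set.mem_ofPred_eq, smul_eq_mul, coeff_mul]
    refine ⟨fun b hb => Ideal.sum_mem _ fun x hx => Ideal.mul_mem_left _ _ (h1 _ ?_),
      fun b => Ideal.sum_mem _ fun x hx => Ideal.mul_mem_left _ _ (h2 _)⟩
    have := Finset.HasAntidiagonal.mem_antidiagonal.1 hx
    omega

theorem mem_jI {R : Type*} [CommRing R] {L H : Ideal R} {c : ℕ} {f : R[X]} :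
    f ∈ jI L H c ↔ (∀ b < c, f.coeff b ∈ L) ∧ ∀ b, f.coeff b ∈ L ⊔ H := Iff.rfl

theorem jI_expand {R : Type*} [CommRing R] (L H : Ideal R) :
    (jI L H 1).map (expand R 2 : R[X] →+* R[X]) = jI L H 2 := by
  ext f
  rw [mem_map_expand]
  simp only [mem_jI, coeff_contract (two_ne_zero), coeff_divX]
  constructor
  · rintro ⟨⟨h1, h2⟩, h3, h4⟩
    have a := h1 0 (by norm_num)
    have a' := h3 0 (by norm_num)
    refine ⟨fun b hb => ?_, fun b => ?_⟩
    · interval_cases b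
      · simpa using a
      · simpa using a'
    · rcases Nat.even_or_odd' b with ⟨c, rfl | rfl⟩
      · rw [mul_comm]; exact h2 c
      · rw [mul_comm]; exact h4 c
  · rintro ⟨h1, h2⟩
    exact ⟨⟨fun b hb => h1 _ (by omega), fun b => h2 _⟩, fun b hb => h1 _ (by omega), fun b => h2 _⟩

theorem nz_jI {R : Type*} [CommRing R] (L H : Ideal R) (x : R)
    (hx : ∀ h ∈ L ⊔ H, x * h ∈ L → h ∈ L) (c : ℕ) : NZ (jI L H c) (X - C x) := by
  intro f hf
  obtain ⟨h1, h2⟩ := mem_jI.1 hf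
  have hs : ∀ b, ((X - C x) * f).coeff (b + 1) = f.coeff b - x * f.coeff (b + 1) := by
    intro b; rw [sub_mul, coeff_sub, coeff_X_mul, coeff_C_mul]
  have h0 : ((X - C x) * f).coeff 0 = - (x * f.coeff 0) := by
    simp [sub_mul, coeff_sub]
  -- all coefficients in `L ⊔ H`
  have hLH : ∀ b, f.coeff b ∈ L ⊔ H := by
    have : ∀ d b, f.natDegree + 1 = b + d → f.coeff b ∈ L ⊔ H := by
      intro d
      induction d with
      | zero => intro b hb; rw [coeff_eq_zero_of_natDegree_lt (by omega)]; exact Ideal.zero_mem _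
      | succ d ih =>
        intro b hb
        have := Ideal.add_mem _ (h2 (b + 1)) (Ideal.mul_mem_left _ x (ih (b + 1) (by omega)))
        rw [hs] at this
        simpa using this
    intro b
    by_cases hb : b ≤ f.natDegree + 1
    · exact this (f.natDegree + 1 - b) b (by omega)
    · rw [coeff_eq_zero_of_natDegree_lt (by omega)]; exact Ideal.zero_mem _
  refine mem_jI.2 ⟨fun b => ?_, hLH⟩
  induction b with
  | zero =>
    intro hb
    refine hx _ (hLH _) ?_
    have := h1 0 hb
    rw [h0] at this
    simpa using this
  | succ b ih =>
    intro hb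
    refine hx _ (hLH _) ?_
    have := h1 (b + 1) hb
    rw [hs] at this
    have := L.sub_mem (ih (by omega)) this
    simpa using this

theorem jI_comap {R : Type*} [CommRing R] (L H : Ideal R) (x : R) (c : ℕ) :
    jI L H c ⊔ Ideal.span {X - C x} = (L ⊔ Ideal.span {x ^ c} * H).comap (evalRingHom x) := by
  apply le_antisymm
  · refine sup_le ?_ ?_
    · intro f hf
      obtain ⟨h1, h2⟩ := mem_jI.1 hf
      rw [Ideal.mem_comap, coe_evalRingHom, eval_eq_sum_range]
      refine Ideal.sum_mem _ fun b _ => ?_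
      by_cases hb : b < c
      · exact Ideal.mul_mem_right _ _ (Ideal.mem_sup_left (h1 b hb))
      · obtain ⟨l, hl, h, hh, e⟩ := Submodule.mem_sup.1 (h2 b)
        rw [← e, add_mul]
        refine Ideal.add_mem _ (Ideal.mul_mem_right _ _ (Ideal.mem_sup_left hl)) (Ideal.mem_sup_right ?_)
        rw [show b = c + (b - c) by omega, pow_add]
        have := Ideal.mul_mem_left _ (x ^ (b - c)) (Ideal.mul_mem_mul (Ideal.mem_span_singleton_self (x ^ c)) hh)
        convert this using 1; ring
    · rw [Ideal.span_le]; rintro _ rfl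
      simp
  · intro f hf
    rw [Ideal.mem_comap, coe_evalRingHom] at hf
    obtain ⟨q, hq⟩ : (X - C x) ∣ f - C (f.eval x) := X_sub_C_dvd_sub_C_eval
    obtain ⟨l, hl, g, hg, e⟩ := Submodule.mem_sup.1 hf
    obtain ⟨h, hh, rfl⟩ := Ideal.mem_span_singleton_mul.1 hg
    obtain ⟨q', hq'⟩ : (X - C x) ∣ X ^ c - C x ^ c := sub_dvd_pow_sub_pow _ _ _
    refine mem_sup_sp.2 ⟨q - q' * C h, ?_⟩
    have e2 : f - (X - C x) * (q - q' * C h) = C l + X ^ c * C h := by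
      have : f = C (f.eval x) + (X - C x) * q := by rw [← hq]; ring
      rw [mul_sub, ← mul_assoc, ← hq']
      conv_lhs => rw [this]
      rw [← e]
      simp only [map_add, map_mul, map_pow]
      ring
    rw [e2, mem_jI]
    have h3 : ∀ b, (X ^ c * C h).coeff b = if b = c then h else 0 := by
      intro b; rw [coeff_mul_C, coeff_X_pow]; split_ifs <;> simp
    simp only [coeff_add, h3]
    have h4 : ∀ b, (C l).coeff b ∈ L := by
      intro b; rw [coeff_C]; split_ifs; exacts [hl, L.zero_mem]
    refine ⟨fun b hb => ?_, fun b => Ideal.add_mem _ (Ideal.mem_sup_left (h4 b)) (Ideal.mem_sup_right ?_)⟩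
    · rw [if_neg hb.ne, add_zero]; exact h4 b
    · split_ifs; exacts [hh, H.zero_mem]

theorem DP_shift {R : Type*} [CommRing R] [IsNoetherianRing R] (m L H : Ideal R) (x : R)
    (hxm : x ∈ m) (hx : ∀ h ∈ L ⊔ H, x * h ∈ L → h ∈ L) (k : ℕ) :
    DP m k (L ⊔ Ideal.span {x ^ 1} * H) ↔ DP m k (L ⊔ Ideal.span {x ^ 2} * H) := by
  have hm : m.comap (constantCoeff (R := R)) = m.comap (evalRingHom x) := by
    ext f
    rw [Ideal.mem_comap, Ideal.mem_comap, coe_evalRingHom, constantCoeff_apply]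
    conv_rhs => rw [← divX_mul_X_add f]
    simp only [eval_add, eval_mul, eval_X, eval_C]
    rw [Ideal.add_mem_iff_right _ (Ideal.mul_mem_left _ _ hxm)]
  have key : ∀ c, DP m k (L ⊔ Ideal.span {x ^ c} * H) ↔
      DP (m.comap (constantCoeff (R := R))) (k + 1) (jI L H c) := by
    intro c
    rw [← DP_comap (evalRingHom x) (fun r => ⟨C r, by simp⟩), ← jI_comap, ← hm]
    have hX : X - C x ∈ m.comap (constantCoeff (R := R)) := by
      simpa [Ideal.mem_comap] using hxm
    exact ⟨fun h => ⟨_, hX, nz_jI L H x hx c, h⟩, fun h => DP_exch _ _ _ _ hX (nz_jI L H x hx c) h⟩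
  rw [key, key, ← jI_expand, DP_expand]

end Polynomial

theorem mem_monSp {K : Type} [Field K] {n : ℕ} {s : Set (Fin n →₀ ℕ)} {f : MvPolynomial (Fin n) K} :
    f ∈ Ideal.span ((fun a => monomial a (1 : K)) '' s) ↔ ∀ u ∈ f.support, ∃ a ∈ s, a ≤ u :=
  mem_ideal_span_monomial_image

theorem shift_eq (K : Type) [Field K] {n q : ℕ} (u : Fin q → Fin n →₀ ℕ) (i : Fin n) (t c : ℕ) :
    Ideal.span ((fun a => monomial a (1 : K)) '' {a | ∃ j, u j i < t ∧ a = u j}) ⊔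
      Ideal.span {(X i : MvPolynomial (Fin n) K) ^ c} *
      Ideal.span ((fun a => monomial a (1 : K)) ''
        {a | ∃ j, t ≤ u j i ∧ a = u j - Finsupp.single i 1}) =
    monIdeal K (fun j => if t ≤ u j i then u j - Finsupp.single i 1 + Finsupp.single i c else u j) := by
  have hX : ∀ a : Fin n →₀ ℕ, (X i : MvPolynomial (Fin n) K) ^ c * monomial a 1 =
      monomial (a + Finsupp.single i c) 1 := by
    intro a
    rw [X_pow_eq_monomial, monomial_mul, add_comm, one_mul]
  apply le_antisymm
  · refine sup_le ?_ ?_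
    · rw [Ideal.span_le]
      rintro _ ⟨_, ⟨j, hj, rfl⟩, rfl⟩
      refine Ideal.subset_span ⟨j, ?_⟩
      simp [not_le.2 hj]
    · rw [Ideal.span_mul_span', Ideal.span_le]
      rintro _ ⟨_, rfl, _, ⟨_, ⟨j, hj, rfl⟩, rfl⟩, rfl⟩
      refine Ideal.subset_span ⟨j, ?_⟩
      simp only [hX, if_pos hj]
  · rw [monIdeal, Ideal.span_le]
    rintro _ ⟨j, rfl⟩
    by_cases hj : t ≤ u j i
    · simp only [if_pos hj, ← hX]
      exact Ideal.mem_sup_right (Ideal.mul_mem_mul (Ideal.mem_span_singleton_self _)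
        (Ideal.subset_span ⟨_, ⟨j, hj, rfl⟩, rfl⟩))
    · simp only [if_neg hj]
      exact Ideal.mem_sup_left (Ideal.subset_span ⟨_, ⟨j, not_le.1 hj, rfl⟩, rfl⟩)

theorem DP_mon_shift (K : Type) [Field K] {n q : ℕ} (u : Fin q → Fin n →₀ ℕ) (i : Fin n) (t : ℕ)
    (ht : 1 ≤ t) (k : ℕ) :
    DP (mIdeal K n) k (monIdeal K u) ↔
    DP (mIdeal K n) k (monIdeal K fun j => if t ≤ u j i then u j + Finsupp.single i 1 else u j) := by
  have h := Polynomial.DP_shift (mIdeal K n)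
    (Ideal.span ((fun a => monomial a (1 : K)) '' {a | ∃ j, u j i < t ∧ a = u j}))
    (Ideal.span ((fun a => monomial a (1 : K)) ''
        {a | ∃ j, t ≤ u j i ∧ a = u j - Finsupp.single i 1})) (X i)
    (Ideal.subset_span ⟨i, rfl⟩) ?_ k
  · rw [shift_eq, shift_eq] at h
    have e1 : (fun j => if t ≤ u j i then u j - Finsupp.single i 1 + Finsupp.single i 1 else u j) = u := by
      funext j
      split_ifs with hj
      · exact tsub_add_cancel_of_le (Finsupp.single_le_iff.2 (by omega))
      · rfl
    have e2 : (fun j => if t ≤ u j i then u j - Finsupp.single i 1 + Finsupp.single i 2 else u j) =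
        fun j => if t ≤ u j i then u j + Finsupp.single i 1 else u j := by
      funext j
      split_ifs with hj
      · rw [show (2 : ℕ) = 1 + 1 from rfl, Finsupp.single_add, ← add_assoc,
          tsub_add_cancel_of_le (Finsupp.single_le_iff.2 (by omega))]
      · rfl
    rwa [e1, e2] at h
  · intro h hh hxh
    rw [← Ideal.span_union, ← Set.image_union, mem_monSp] at hh
    rw [mem_monSp] at hxh ⊢
    intro w hw
    obtain ⟨b, hb, hbw⟩ := hh w hw
    rcases hb with hb | ⟨j, hj, rfl⟩
    · exact ⟨b, hb, hbw⟩
    · obtain ⟨a, ⟨l, hl, rfl⟩, ha⟩ := hxh (w + Finsupp.single i 1) (by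
        rw [mem_support_iff, mul_comm, coeff_mul_X]
        exact mem_support_iff.1 hw)
      refine ⟨u l, ⟨l, hl, rfl⟩, fun i' => ?_⟩
      by_cases hi : i' = i
      · subst hi
        have := hbw i'
        simp at this
        omega
      · have := ha i'
        simpa [Finsupp.single_apply, Ne.symm hi] using this

theorem sgnExp_apply {n q : ℕ} (v : Fin q → Fin n →₀ ℕ) (j : Fin q) (i : Fin n) :
    sgnExp v j i =
      ((Finset.univ.image fun k : Fin q => v k i).filter fun m => m < v j i).card := rfl

theorem sgn_of_full {n q : ℕ} (v : Fin q → Fin n →₀ ℕ)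
    (h : ∀ i j s, s < v j i → ∃ j', v j' i = s) : sgnExp v = v := by
  funext j
  ext i
  rw [sgnExp_apply]
  conv_rhs => rw [← Finset.card_range (v j i)]
  congr 1
  ext s
  simp only [Finset.mem_filter, Finset.mem_image, Finset.mem_univ, true_and, Finset.mem_range]
  exact ⟨fun h => h.2, fun hs => ⟨h i j s hs, hs⟩⟩

theorem sgn_congr {n q : ℕ} (v w : Fin q → Fin n →₀ ℕ)
    (g : Fin n → ℕ → ℕ) (h : ∀ i j, v j i = g i (w j i))
    (hm : ∀ i j k, w j i < w k i → g i (w j i) < g i (w k i)) : sgnExp v = sgnExp w := by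
  funext j
  ext i
  rw [sgnExp_apply, sgnExp_apply]
  have hm' : ∀ j k, g i (w j i) < g i (w k i) → w j i < w k i := by
    intro j k hjk
    by_contra hc
    rcases (not_lt.1 hc).lt_or_eq with h1 | h1
    · exact absurd (hm i _ _ h1) (by omega)
    · rw [h1] at hjk; omega
  have e : ((Finset.univ.image fun k : Fin q => v k i).filter fun m => m < v j i) =
    ((Finset.univ.image fun k : Fin q => w k i).filter fun m => m < w j i).image (g i) := by
    ext s
    simp only [Finset.mem_filter, Finset.mem_image, Finset.mem_univ, true_and, h]
    constructor
    · rintro ⟨⟨k, rfl⟩, hk⟩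
      exact ⟨_, ⟨⟨k, rfl⟩, hm' _ _ hk⟩, rfl⟩
    · rintro ⟨_, ⟨⟨k, rfl⟩, hk⟩, rfl⟩
      exact ⟨⟨k, rfl⟩, hm _ _ _ hk⟩
  rw [e, Finset.card_image_of_injOn]
  intro a ha b hb hab
  simp only [Finset.coe_filter, Finset.mem_image, Finset.mem_univ, true_and] at ha hb
  obtain ⟨⟨k, rfl⟩, -⟩ := ha
  obtain ⟨⟨l, rfl⟩, -⟩ := hb
  rcases lt_trichotomy (w k i) (w l i) with h1 | h1 | h1
  · exact absurd (hm _ _ _ h1) (by omega)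
  · exact h1
  · exact absurd (hm _ _ _ h1) (by omega)

theorem DP_sgn (K : Type) [Field K] {n q : ℕ} (k : ℕ) (N : ℕ) : ∀ (w : Fin q → Fin n →₀ ℕ),
    (∀ i, ∃ j, w j i = 0) → ∑ j, ∑ i, w j i = N →
    (DP (mIdeal K n) k (monIdeal K w) ↔ DP (mIdeal K n) k (monIdeal K (sgnExp w))) := by
  induction N using Nat.strong_induction_on with
  | _ N ih =>
  intro w h0 hN
  by_cases hf : ∀ i j s, s < w j i → ∃ j', w j' i = s
  · rw [sgn_of_full w hf]
  · push Not at hf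
    obtain ⟨i, j0, s, hs, hne⟩ := hf
    have hs1 : 1 ≤ s := by
      obtain ⟨j, hj⟩ := h0 i
      have := hne j
      omega
    let u : Fin q → Fin n →₀ ℕ := fun j => if s < w j i then w j - Finsupp.single i 1 else w j
    have hu : ∀ j i', u j i' = if i' = i ∧ s < w j i' then w j i' - 1 else w j i' := by
      intro j i'
      simp only [u]
      by_cases hi : i' = i
      · subst hi; split_ifs <;> simp_all
      · split_ifs <;> simp_all [Finsupp.single_apply, Ne.symm hi]
    have hw : (fun j => if s ≤ u j i then u j + Finsupp.single i 1 else u j) = w := by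
      funext j
      ext i'
      have h1 := hu j i
      have h2 := hu j i'
      have h3 := hne j
      by_cases hi : i' = i
      · subst hi
        simp only [true_and] at h1
        split_ifs at h1 ⊢ <;> (try simp) <;> omega
      · simp only [hi, false_and, if_false] at h2
        split_ifs <;> simp [Finsupp.single_apply, Ne.symm hi, h2]
    have hsgn : sgnExp u = sgnExp w := by
      refine sgn_congr u w (fun i' x => if i' = i ∧ s < x then x - 1 else x) (fun i' j => hu j i') ?_
      intro i' j k hjk
      by_cases hi : i' = i
      · subst hi
        have := hne j
        have := hne k
        simp only [true_and]
        split_ifs <;> omega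
      · simpa [hi] using hjk
    have hle : ∀ j i', u j i' ≤ w j i' := by
      intro j i'; rw [hu]; split_ifs <;> omega
    have hlt : ∑ j, ∑ i, u j i < N := by
      rw [← hN]
      refine Finset.sum_lt_sum (fun j _ => Finset.sum_le_sum fun i' _ => hle j i')
        ⟨j0, Finset.mem_univ _, Finset.sum_lt_sum (fun i' _ => hle j0 i') ⟨i, Finset.mem_univ _, ?_⟩⟩
      rw [hu, if_pos ⟨rfl, hs⟩]; omega
    have h0u : ∀ i, ∃ j, u j i = 0 := by
      intro i'
      obtain ⟨j, hj⟩ := h0 i'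
      exact ⟨j, by have := hle j i'; omega⟩
    have := ih _ hlt u h0u rfl
    rw [← hsgn, ← this, DP_mon_shift K u i s hs1 k, hw]

theorem nz_iff {R : Type*} [CommRing R] (I : Ideal R) (x : R) : IsSMulRegular (R ⧸ I) x ↔ NZ I x := by
  rw [isSMulRegular_iff_right_eq_zero_of_smul]
  unfold NZ
  rw [Ideal.Quotient.mk_surjective.forall]
  refine forall_congr' fun r => ?_
  rw [Algebra.smul_def, Ideal.Quotient.algebraMap_eq, ← map_mul, Ideal.Quotient.eq_zero_iff_mem,
    Ideal.Quotient.eq_zero_iff_mem]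

open Pointwise in
theorem quot_equiv {R : Type*} [CommRing R] (I : Ideal R) (x : R) :
    Nonempty (QuotSMulTop x (R ⧸ I) ≃ₗ[R] (R ⧸ (I ⊔ Ideal.span {x}))) := by
  have e : (x • ⊤ : Submodule R (R ⧸ I)) = Submodule.map (Submodule.mkQ I) (Ideal.span {x}) := by
    ext y
    obtain ⟨y, rfl⟩ := Ideal.Quotient.mk_surjective y
    rw [Submodule.mem_smul_pointwise_iff_exists, Submodule.mem_map]
    constructor
    · rintro ⟨b, -, hb⟩
      obtain ⟨b, rfl⟩ := Ideal.Quotient.mk_surjective b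
      exact ⟨x * b, Ideal.mem_span_singleton.2 ⟨b, rfl⟩, hb⟩
    · rintro ⟨z, hz, hb⟩
      obtain ⟨b, rfl⟩ := Ideal.mem_span_singleton.1 hz
      exact ⟨Ideal.Quotient.mk I b, trivial, hb⟩
  exact ⟨(Submodule.quotEquivOfEq _ _ e).trans (Submodule.quotientQuotientEquivQuotientSup I (Ideal.span {x}))⟩

theorem wreg_iff {R : Type*} [CommRing R] (m : Ideal R) (k : ℕ) : ∀ I : Ideal R,
    (∃ rs : List R, rs.length = k ∧ (∀ r ∈ rs, r ∈ m) ∧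
      RingTheory.Sequence.IsWeaklyRegular (R ⧸ I) rs) ↔ DP m k I := by
  induction k with
  | zero => exact fun I => ⟨fun _ => trivial, fun _ => ⟨[], rfl, by simp, by simp⟩⟩
  | succ k ih =>
    intro I
    simp only [DP, ← ih]
    constructor
    · rintro ⟨rs, hl, hm, hr⟩
      match rs, hl with
      | x :: rs, hl =>
        rw [RingTheory.Sequence.isWeaklyRegular_cons_iff, nz_iff] at hr
        obtain ⟨e⟩ := quot_equiv I x
        exact ⟨x, hm x (by simp), hr.1, rs, by simpa using hl, fun r h => hm r (by simp [h]),
          (e.isWeaklyRegular_congr rs).1 hr.2⟩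
    · rintro ⟨x, hx, hn, rs, hl, hm, hr⟩
      obtain ⟨e⟩ := quot_equiv I x
      refine ⟨x :: rs, by simp [hl], by simpa using ⟨hx, hm⟩, ?_⟩
      rw [RingTheory.Sequence.isWeaklyRegular_cons_iff, nz_iff]
      exact ⟨hn, (e.isWeaklyRegular_congr rs).2 hr⟩

theorem reg_iff {R : Type*} [CommRing R] (m : Ideal R) (hm1 : (1 : R) ∉ m) (k : ℕ) (I : Ideal R)
    (hI : I ≤ m) :
    (∃ rs : List R, rs.length = k ∧ (∀ r ∈ rs, r ∈ m) ∧
      RingTheory.Sequence.IsRegular (R ⧸ I) rs) ↔ DP m k I := by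
  rw [← wreg_iff]
  refine exists_congr fun rs => and_congr_right fun _ => and_congr_right fun hm => ?_
  refine ⟨fun h => h.1, fun h => ⟨h, fun htop => hm1 ?_⟩⟩
  have h1 : (Ideal.ofList rs • ⊤ : Submodule R (R ⧸ I)) ≤ Submodule.map (Submodule.mkQ I) m := by
    refine Submodule.smul_le.2 fun r hr y _ => ?_
    obtain ⟨y, rfl⟩ := Ideal.Quotient.mk_surjective y
    have hr' : r ∈ m := (Ideal.span_le.2 (fun z hz => hm z hz) : Ideal.ofList rs ≤ m) hr
    exact ⟨r * y, Ideal.mul_mem_right _ _ hr', rfl⟩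
  have h2 : Ideal.Quotient.mk I 1 ∈ Submodule.map (Submodule.mkQ I) m := h1 (htop ▸ trivial)
  obtain ⟨z, hz, hz1⟩ := h2
  have h3 : z - 1 ∈ I := Ideal.Quotient.eq.1 hz1
  have := m.sub_mem hz (hI h3)
  simpa using this

theorem one_notMem_mIdeal (K : Type) [Field K] (n : ℕ) : (1 : MvPolynomial (Fin n) K) ∉ mIdeal K n := by
  have : mIdeal K n ≤ RingHom.ker (constantCoeff (R := K) (σ := Fin n)) := by
    rw [mIdeal, Ideal.span_le]
    rintro _ ⟨i, rfl⟩
    simp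
  intro h
  simpa using this h

theorem depth_congr (K : Type) [Field K] (n : ℕ) (I I' : Ideal (MvPolynomial (Fin n) K))
    (h1 : I ≤ mIdeal K n) (h2 : I' ≤ mIdeal K n)
    (h : ∀ k, DP (mIdeal K n) k I ↔ DP (mIdeal K n) k I') : depthQuot K n I = depthQuot K n I' := by
  unfold depthQuot
  congr 1
  ext k
  exact (reg_iff _ (one_notMem_mIdeal K n) k I h1).trans
    ((h k).trans (reg_iff _ (one_notMem_mIdeal K n) k I' h2).symm)

theorem monIdeal_le_m (K : Type) [Field K] {n q : ℕ} (v : Fin q → Fin n →₀ ℕ) (h : ∀ j, v j ≠ 0) :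
    monIdeal K v ≤ mIdeal K n := by
  rw [monIdeal, Ideal.span_le]
  rintro _ ⟨j, rfl⟩
  obtain ⟨i, hi⟩ := Finsupp.ne_iff.1 (h j)
  have : Finsupp.single i 1 ≤ v j :=
    Finsupp.single_le_iff.2 (Nat.one_le_iff_ne_zero.2 (by simpa using hi))
  have e : monomial (v j) (1 : K) = monomial (v j - Finsupp.single i 1) 1 * X i := by
    rw [X, monomial_mul, tsub_add_cancel_of_le this, one_mul]
  simp only [e]
  exact Ideal.mul_mem_left _ _ (Ideal.subset_span ⟨i, rfl⟩)

theorem monIdeal_top (K : Type) [Field K] {n q : ℕ} (v : Fin q → Fin n →₀ ℕ) (j : Fin q)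
    (h : v j = 0) : monIdeal K v = ⊤ :=
  (Ideal.eq_top_iff_one _).2 (Ideal.subset_span ⟨j, by simp [h]⟩)

theorem mon_le_radical (K : Type) [Field K] {n q : ℕ} (v w : Fin q → Fin n →₀ ℕ)
    (h : ∀ j i, v j i = 0 → w j i = 0) : monIdeal K v ≤ (monIdeal K w).radical := by
  rw [monIdeal, Ideal.span_le]
  rintro _ ⟨j, rfl⟩
  refine ⟨∑ i, w j i, ?_⟩
  rw [monomial_pow, one_pow]
  have : w j ≤ (∑ i, w j i) • v j := by
    intro i
    rw [Finsupp.smul_apply, smul_eq_mul]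
    rcases Nat.eq_zero_or_pos (v j i) with h0 | h0
    · rw [h j i h0]; exact Nat.zero_le _
    · calc w j i ≤ ∑ i, w j i := Finset.single_le_sum (fun _ _ => Nat.zero_le _) (Finset.mem_univ i)
        _ ≤ _ := Nat.le_mul_of_pos_right _ h0
  have e : monomial ((∑ i, w j i) • v j) (1 : K) = monomial ((∑ i, w j i) • v j - w j) 1 * monomial (w j) 1 := by
    rw [monomial_mul, tsub_add_cancel_of_le this, one_mul]
  rw [e]
  exact Ideal.mul_mem_left _ _ (Ideal.subset_span ⟨j, rfl⟩)

theorem dim_congr {R : Type*} [CommRing R] (I J : Ideal R) (h1 : I ≤ J.radical) (h2 : J ≤ I.radical) :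
    ringKrullDim (R ⧸ I) = ringKrullDim (R ⧸ J) := by
  have : I.radical = J.radical :=
    le_antisymm (Ideal.radical_le_radical_iff.2 h1) (Ideal.radical_le_radical_iff.2 h2)
  rw [ringKrullDim_quotient, ringKrullDim_quotient, ← PrimeSpectrum.zeroLocus_radical I, this,
    PrimeSpectrum.zeroLocus_radical]

theorem zero_row (K : Type) [Field K] {n q : ℕ} (v : Fin q → Fin n →₀ ℕ)
    (hht : (2 : ℕ∞) ≤ heightOf (monIdeal K v)) (i : Fin n) : ∃ j, v j i = 0 := by
  by_contra hcon
  push Not at hcon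
  have hp : Prime (X i : MvPolynomial (Fin n) K) := MvPolynomial.X_prime
  have hpI : (Ideal.span {(X i : MvPolynomial (Fin n) K)}).IsPrime :=
    (Ideal.span_singleton_prime hp.ne_zero).2 hp
  have hle : monIdeal K v ≤ Ideal.span {(X i : MvPolynomial (Fin n) K)} := by
    rw [monIdeal, Ideal.span_le]
    rintro _ ⟨j, rfl⟩
    have : Finsupp.single i 1 ≤ v j :=
      Finsupp.single_le_iff.2 (Nat.one_le_iff_ne_zero.2 (hcon j))
    have e : monomial (v j) (1 : K) = monomial (v j - Finsupp.single i 1) 1 * X i := by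
      rw [X, monomial_mul, tsub_add_cancel_of_le this, one_mul]
    simp only [e]
    exact Ideal.mul_mem_left _ _ (Ideal.mem_span_singleton_self _)
  have h1 : heightOf (monIdeal K v) ≤ Order.height (⟨_, hpI⟩ : PrimeSpectrum (MvPolynomial (Fin n) K)) :=
    iInf₂_le (⟨_, hpI⟩ : PrimeSpectrum (MvPolynomial (Fin n) K)) hle
  have h2 : (Ideal.span {(X i : MvPolynomial (Fin n) K)}).height ≤ 1 := by
    apply Ideal.height_le_one_of_isPrincipal_of_mem_minimalPrimes (Ideal.span {X i})
    rw [Ideal.minimalPrimes_eq_subsingleton_self]; rfl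
  have h3 := PrimeSpectrum.height_eq_orderHeight (⟨_, hpI⟩ : PrimeSpectrum (MvPolynomial (Fin n) K))
  have h4 : (2 : ℕ∞) ≤ 1 := hht.trans (h1.trans (h3 ▸ h2))
  exact absurd h4 (by decide)

/-- **Signature invariants of monomial ideals** (Theorem: Cohen–Macaulayness).
Let `I` be a monomial ideal of `R = K[x_1,…,x_n]` of height at least `2`, with minimal
monomial generating set `G(I) = {x^{v_1},…,x^{v_q}}`.  Then `R/I` is Cohen–Macaulay if
and only if `R/sgn(I)` is Cohen–Macaulay. -/
theorem cm_quot_iff_cm_quot_sgn (K : Type) [Field K] (n q : ℕ)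
    (v : Fin q → Fin n →₀ ℕ) (hv : AntichainFam v)
    (I : Ideal (MvPolynomial (Fin n) K)) (hI : I = monIdeal K v)
    (hht : (2 : ℕ∞) ≤ heightOf I) :
    cmQuot K n I ↔ cmQuot K n (monIdeal K (sgnExp v)) := by
  subst hI
  have h0 := zero_row K v hht
  have hz : ∀ j i, v j i = 0 ↔ sgnExp v j i = 0 := by
    intro j i
    rw [sgnExp_apply, Finset.card_eq_zero, Finset.filter_eq_empty_iff]
    simp only [Finset.mem_image, Finset.mem_univ, true_and, forall_exists_index,
      forall_apply_eq_imp_iff, not_lt]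
    obtain ⟨j', hj'⟩ := h0 i
    exact ⟨fun h k => by omega, fun h => by have := h j'; omega⟩
  have hz' : ∀ j, v j = 0 ↔ sgnExp v j = 0 := by
    intro j
    simp only [Finsupp.ext_iff, Finsupp.zero_apply, hz]
  by_cases hex : ∃ j, v j = 0
  · obtain ⟨j, hj⟩ := hex
    rw [monIdeal_top K v j hj, monIdeal_top K (sgnExp v) j ((hz' j).1 hj)]
  · push Not at hex
    unfold cmQuot
    rw [depth_congr K n _ _ (monIdeal_le_m K v hex)
      (monIdeal_le_m K (sgnExp v) fun j h => hex j ((hz' j).2 h))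
      (fun k => DP_sgn K k _ v h0 rfl),
      dim_congr _ _ (mon_le_radical K v (sgnExp v) fun j i => (hz j i).1)
        (mon_le_radical K (sgnExp v) v fun j i => (hz j i).2)]
end

section
/- Let I be a monomial ideal of R = K[x_1,…,x_n] of height at least 2. Then R/I is Gorenstein if and only if R/sgn(I) is Gorenstein. -/
open MvPolynomial

/-- Basis (index) type of the `k`-th free module `F_k = ⊕_j R(-j)^{b k j}` of a graded
free resolution: a basis element is a pair `(j, t)` where `j` is its degree shift. -/
def resBas (b : ℕ → ℕ → ℕ) (k : ℕ) : Type := Σ j : ℕ, Fin (b k j)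

/-- The `R`-linear map `(α →₀ R) → (β →₀ R)` determined by the matrix whose row at the
basis element `e : α` is `D e`. -/
noncomputable def resMap {R : Type*} [CommRing R] {α β : Type*}
    (D : α → (β →₀ R)) : (α →₀ R) →ₗ[R] (β →₀ R) :=
  Finsupp.linearCombination R D

/-- A minimal graded free resolution `0 → F_g → ⋯ → F_1 → F_0 = R → R/I → 0` of `R/I`
over the standard graded polynomial ring `R = K[x_1,…,x_n]`, where
`F_k = ⊕_j R(-j)^{b k j}`.  The differentials are graded of degree `0`: the matrix entry
from a basis element with shift `j` to one with shift `j'` is homogeneous of degree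
`j - j'`; minimality holds since all (nonzero) entries have `j' < j`, hence positive
degree, i.e. lie in the graded maximal ideal. -/
structure MinFreeRes (K : Type) [Field K] (n : ℕ)
    (I : Ideal (MvPolynomial (Fin n) K)) where
  /-- the length `g` of the resolution -/
  len : ℕ
  /-- the graded Betti numbers: `F_k = ⊕_j R(-j)^{b k j}` -/
  b : ℕ → ℕ → ℕ
  /-- `F_0 = R` (one copy, no shift) -/
  hb0 : ∀ j, b 0 j = if j = 0 then 1 else 0
  /-- the resolution stops at homological degree `len` -/
  htop : ∀ k, len < k → ∀ j, b k j = 0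
  /-- there are only finitely many nonzero Betti numbers -/
  hfin : (Function.support fun kj : ℕ × ℕ => b kj.1 kj.2).Finite
  /-- the matrices of the differentials `d_{k+1} : F_{k+1} → F_k` -/
  D : ∀ k : ℕ, resBas b (k + 1) → (resBas b k →₀ MvPolynomial (Fin n) K)
  /-- gradedness and minimality of the differentials -/
  hhom : ∀ k e e', D k e e' = 0 ∨
    (e'.1 < e.1 ∧ (D k e e').IsHomogeneous (e.1 - e'.1))
  /-- exactness at `F_k` for `k ≥ 1`; taking `k = len` this also forces injectivity of
  the last differential, since `F_k = 0` for `k > len` -/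
  hexact : ∀ k, LinearMap.range (resMap (D (k + 1))) = LinearMap.ker (resMap (D k))
  /-- exactness at `F_0`, the augmentation `F_0 = R → R/I` being the quotient map -/
  hexact0 : LinearMap.range (resMap (D 0)) =
    LinearMap.ker (Finsupp.linearCombination (MvPolynomial (Fin n) K)
      (fun _ : resBas b 0 => (1 : MvPolynomial (Fin n) K ⧸ I)))

/-- The Castelnuovo–Mumford regularity of `R/I`, computed from a minimal graded free
resolution: `reg(R/I) = max { j - k : b k j ≠ 0 }`. -/
noncomputable def MinFreeRes.reg {K : Type} [Field K] {n : ℕ}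
    {I : Ideal (MvPolynomial (Fin n) K)} (F : MinFreeRes K n I) : ℤ :=
  sSup { d : ℤ | ∃ k j : ℕ, F.b k j ≠ 0 ∧ d = (j : ℤ) - (k : ℤ) }

/-- `R/I` is Gorenstein: it is Cohen–Macaulay and in the minimal graded free resolution
`0 → F_g → ⋯ → F_0 → R/I → 0` the last free module `F_g` has rank `1`, i.e. there is a
unique shift `j₀` with `b_{g,j₀} ≠ 0` and `b_{g,j₀} = 1`. -/
noncomputable def gorQuot (K : Type) [Field K] (n : ℕ)
    (I : Ideal (MvPolynomial (Fin n) K)) : Prop :=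
  cmQuot K n I ∧ ∃ F : MinFreeRes K n I, ∃ j₀ : ℕ, F.b F.len j₀ = 1 ∧
    ∀ j, F.b F.len j ≠ 0 → j = j₀



section SchanuelPart
variable {R : Type} [CommRing R]

/-- Schanuel -/
lemma schanuel_aux {M P P' : Type} [AddCommGroup M] [Module R M] [AddCommGroup P] [Module R P]
    [AddCommGroup P'] [Module R P'] [Module.Projective R P] [Module.Projective R P']
    (p : P →ₗ[R] M) (p' : P' →ₗ[R] M) (hp : Function.Surjective p)
    (hp' : Function.Surjective p') :
    Nonempty ((LinearMap.ker p × P') ≃ₗ[R] (LinearMap.ker p' × P)) := by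
  obtain ⟨s, hs⟩ := Module.projective_lifting_property p p' hp
  obtain ⟨s', hs'⟩ := Module.projective_lifting_property p' p hp'
  have hs1 : ∀ x, p (s x) = p' x := fun x => LinearMap.congr_fun hs x
  have hs2 : ∀ x, p' (s' x) = p x := fun x => LinearMap.congr_fun hs' x
  -- (z, y') ↦ (z + s y', y') in the fibre product; inverse (x, y') ↦ (x - s y', y')
  refine ⟨LinearEquiv.ofLinearMap
    (LinearMap.prod
      (LinearMap.codRestrict _ (LinearMap.snd R _ _ - s' ∘ₗ ((LinearMap.ker p).subtype ∘ₗ LinearMap.fst R _ _ + s ∘ₗ LinearMap.snd R _ _)) ?_)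
      ((LinearMap.ker p).subtype ∘ₗ LinearMap.fst R _ _ + s ∘ₗ LinearMap.snd R _ _))
    (LinearMap.prod
      (LinearMap.codRestrict _ (LinearMap.snd R _ _ - s ∘ₗ ((LinearMap.ker p').subtype ∘ₗ LinearMap.fst R _ _ + s' ∘ₗ LinearMap.snd R _ _)) ?_)
      ((LinearMap.ker p').subtype ∘ₗ LinearMap.fst R _ _ + s' ∘ₗ LinearMap.snd R _ _)) ?_ ?_⟩
  · rintro ⟨⟨z, hz⟩, y⟩
    simp only [LinearMap.mem_ker] at hz
    simp [hs1, hs2, hz]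
  · rintro ⟨⟨z, hz⟩, y⟩
    simp only [LinearMap.mem_ker] at hz
    simp [hs1, hs2, hz]
  · apply LinearMap.ext
    rintro ⟨⟨z, hz⟩, y⟩
    apply Prod.ext
    · apply Subtype.ext; simp
    · simp
  · apply LinearMap.ext
    rintro ⟨⟨z, hz⟩, y⟩
    apply Prod.ext
    · apply Subtype.ext; simp
    · simp

/-- a linear map whose values vanish modulo `m` on the kernel -/
lemma hom_equiv_of_cover {M B k : Type} [AddCommGroup M] [Module R M] [Field k] [Algebra R k]
    [Fintype B] (p : (B →₀ R) →ₗ[R] M) (hp : Function.Surjective p)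
    (hm : ∀ z, p z = 0 → ∀ e, algebraMap R k (z e) = 0) :
    Module.finrank k (M →ₗ[R] k) = Fintype.card B ∧ Module.Finite k (M →ₗ[R] k) := by
  classical
  let Φ : (M →ₗ[R] k) →ₗ[k] (B → k) :=
    { toFun := fun f e => f (p (Finsupp.single e 1))
      map_add' := fun f g => by ext; simp
      map_smul' := fun f g => by ext; simp }
  have hinj : Function.Injective Φ := by
    rw [injective_iff_map_eq_zero]
    intro f hf
    have : f ∘ₗ p = 0 := by
      apply Finsupp.lhom_ext'
      intro e
      apply LinearMap.ext_ring
      simpa [Φ] using congrFun hf e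
    ext x
    obtain ⟨y, rfl⟩ := hp x
    simpa using LinearMap.congr_fun this y
  have hsurj : Function.Surjective Φ := by
    intro c
    let h : (B →₀ R) →ₗ[R] k := Finsupp.linearCombination R c
    have hk : LinearMap.ker p ≤ LinearMap.ker h := by
      intro z hz
      simp only [LinearMap.mem_ker] at hz ⊢
      simp only [h, Finsupp.linearCombination_apply, Finsupp.sum]
      apply Finset.sum_eq_zero
      intro e _
      rw [Algebra.smul_def, hm z hz e, zero_mul]
    let f : M →ₗ[R] k := ((LinearMap.ker p).liftQ h hk) ∘ₗ (p.quotKerEquivOfSurjective hp).symm.toLinearMap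
    refine ⟨f, ?_⟩
    ext e
    have : (p.quotKerEquivOfSurjective hp).symm (p (Finsupp.single e 1)) = Submodule.Quotient.mk (Finsupp.single e 1) := by
      rw [LinearEquiv.symm_apply_eq]; rfl
    simp only [Φ, LinearMap.coe_mk, AddHom.coe_mk, f, LinearMap.comp_apply, LinearEquiv.coe_coe, this]
    simp [h]
  let E := LinearEquiv.ofBijective Φ ⟨hinj, hsurj⟩
  exact ⟨by rw [E.finrank_eq]; simp, Module.Finite.equiv E.symm⟩

lemma cover_step {k : Type} [Field k] [Algebra R k] {M M' B B' : Type} [AddCommGroup M] [Module R M]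
    [AddCommGroup M'] [Module R M'] [Fintype B] [Fintype B']
    (p : (B →₀ R) →ₗ[R] M) (hp : Function.Surjective p)
    (hm : ∀ z, p z = 0 → ∀ e, algebraMap R k (z e) = 0)
    (p' : (B' →₀ R) →ₗ[R] M') (hp' : Function.Surjective p')
    (hm' : ∀ z, p' z = 0 → ∀ e, algebraMap R k (z e) = 0)
    (h : ∃ a : ℕ, Nonempty ((M × (Fin a → R)) ≃ₗ[R] (M' × (Fin a → R)))) :
    Fintype.card B = Fintype.card B' ∧
    ∃ a : ℕ, Nonempty ((LinearMap.ker p × (Fin a → R)) ≃ₗ[R] (LinearMap.ker p' × (Fin a → R))) := by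
  obtain ⟨a, ⟨e⟩⟩ := h
  obtain ⟨c1, f1⟩ := hom_equiv_of_cover (k := k) p hp hm
  obtain ⟨c2, f2⟩ := hom_equiv_of_cover (k := k) p' hp' hm'
  have hc : Fintype.card B = Fintype.card B' := by
    let E1 : ((M × (Fin a → R)) →ₗ[R] k) ≃ₗ[k] ((M' × (Fin a → R)) →ₗ[R] k) :=
      { toFun := fun f => f ∘ₗ e.symm.toLinearMap
        invFun := fun f => f ∘ₗ e.toLinearMap
        left_inv := fun f => by ext <;> simp
        right_inv := fun f => by ext <;> simp
        map_add' := fun f g => by ext <;> simp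
        map_smul' := fun f g => by ext <;> simp }
    let C1 := LinearMap.coprodEquiv (R := R) (M := M) (M₂ := Fin a → R) (M₃ := k) k
    let C2 := LinearMap.coprodEquiv (R := R) (M := M') (M₂ := Fin a → R) (M₃ := k) k
    have f3 : Module.Finite k ((Fin a → R) →ₗ[R] k) :=
      Module.Finite.equiv ((Pi.basisFun R (Fin a)).constr k)
    have := (C1.trans (E1.trans C2.symm)).finrank_eq
    rw [Module.finrank_prod, Module.finrank_prod] at this
    omega
  refine ⟨hc, ?_⟩
  let Q := p.prodMap (LinearMap.id : (Fin a → R) →ₗ[R] (Fin a → R))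
  let Q' := e.symm.toLinearMap ∘ₗ p'.prodMap (LinearMap.id : (Fin a → R) →ₗ[R] (Fin a → R))
  obtain ⟨σ⟩ := schanuel_aux Q Q' (hp.prodMap Function.surjective_id)
    (e.symm.surjective.comp (hp'.prodMap Function.surjective_id))
  have k1 : Nonempty (LinearMap.ker Q ≃ₗ[R] LinearMap.ker p) := by
    refine ⟨LinearEquiv.ofBijective (LinearMap.codRestrict _ (LinearMap.fst R _ _ ∘ₗ (LinearMap.ker Q).subtype) ?_) ⟨?_, ?_⟩⟩
    · rintro ⟨⟨x, y⟩, h⟩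
      simp [Q] at h
      simpa using h.1
    · rintro ⟨⟨x, y⟩, h⟩ ⟨⟨x', y'⟩, h'⟩ hh
      simp [Q] at h h'
      simp [LinearMap.codRestrict] at hh
      simp [hh, h.2, h'.2]
    · rintro ⟨x, hx⟩
      refine ⟨⟨(x, 0), ?_⟩, ?_⟩
      · simpa [Q] using hx
      · rfl
  have k2 : Nonempty (LinearMap.ker Q' ≃ₗ[R] LinearMap.ker p') := by
    refine ⟨LinearEquiv.ofBijective (LinearMap.codRestrict _ (LinearMap.fst R _ _ ∘ₗ (LinearMap.ker Q').subtype) ?_) ⟨?_, ?_⟩⟩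
    · rintro ⟨⟨x, y⟩, h⟩
      simp [Q'] at h
      simpa using h.1
    · rintro ⟨⟨x, y⟩, h⟩ ⟨⟨x', y'⟩, h'⟩ hh
      simp [Q'] at h h'
      simp [LinearMap.codRestrict] at hh
      simp [hh, h.2, h'.2]
    · rintro ⟨x, hx⟩
      refine ⟨⟨(x, 0), ?_⟩, ?_⟩
      · simp only [LinearMap.mem_ker] at hx
        simp [Q', hx]
      · rfl
  obtain ⟨k1⟩ := k1
  obtain ⟨k2⟩ := k2
  have key : ∀ (A : Type) [Fintype A], Fintype.card A = Fintype.card B →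
      Nonempty (((A →₀ R) × (Fin a → R)) ≃ₗ[R] (Fin (Fintype.card B + a) → R)) := by
    intro A _ hA
    have e0 : (A ⊕ Fin a) ≃ Fin (Fintype.card B + a) :=
      Fintype.equivOfCardEq (by simp [hA])
    exact ⟨((Finsupp.linearEquivFunOnFinite R R A).prodCongr (LinearEquiv.refl R _)).trans
      ((LinearEquiv.sumArrowLequivProdArrow A (Fin a) R R).symm.trans
        (LinearEquiv.funCongrLeft R R e0.symm))⟩
  obtain ⟨g1⟩ := key B rfl
  obtain ⟨g2⟩ := key B' hc.symm
  exact ⟨_, ⟨((k1.prodCongr g2).symm.trans σ).trans (k2.prodCongr g1)⟩⟩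

/-- low-level minimal resolutions: uniqueness of ranks -/
structure PreRes (R : Type) [CommRing R] (m I : Ideal R) where
  B : ℕ → Type
  fin : ∀ k, Fintype (B k)
  uniq : Unique (B 0)
  D : ∀ k, B (k + 1) → (B k →₀ R)
  hmin : ∀ k e e', D k e e' ∈ m
  hexact : ∀ k, LinearMap.range (Finsupp.linearCombination R (D (k + 1))) =
    LinearMap.ker (Finsupp.linearCombination R (D k))
  hexact0 : LinearMap.range (Finsupp.linearCombination R (D 0)) =
    LinearMap.ker (Finsupp.linearCombination R (fun _ : B 0 => (1 : R ⧸ I)))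

attribute [instance] PreRes.fin

lemma PreRes.range_mem {m I : Ideal R} (F : PreRes R m I) (k : ℕ) (z : F.B k →₀ R)
    (hz : z ∈ LinearMap.range (Finsupp.linearCombination R (F.D k))) (e : F.B k) : z e ∈ m := by
  obtain ⟨y, rfl⟩ := hz
  rw [Finsupp.linearCombination_apply, Finsupp.sum, Finsupp.finsetSum_apply]
  refine Ideal.sum_mem _ fun i _ => ?_
  rw [Finsupp.smul_apply, smul_eq_mul]
  exact Ideal.mul_mem_left _ _ (F.hmin k i e)

lemma PreRes.surj0 {m I : Ideal R} (F : PreRes R m I) :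
    Function.Surjective (Finsupp.linearCombination R (fun _ : F.B 0 => (1 : R ⧸ I))) := by
  intro x
  obtain ⟨r, rfl⟩ := Ideal.Quotient.mk_surjective x
  refine ⟨Finsupp.single F.uniq.default r, ?_⟩
  rw [Finsupp.linearCombination_single]
  rw [Algebra.smul_def, mul_one]; rfl

lemma PreRes.card_eq {m I : Ideal R} [hm : m.IsMaximal] (F G : PreRes R m I) (k : ℕ) :
    Fintype.card (F.B k) = Fintype.card (G.B k) ∧
    ∃ a : ℕ, Nonempty ((LinearMap.range (Finsupp.linearCombination R (F.D k)) × (Fin a → R)) ≃ₗ[R]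
      (LinearMap.range (Finsupp.linearCombination R (G.D k)) × (Fin a → R))) := by
  let _ : Field (R ⧸ m) := Ideal.Quotient.field m
  induction k with
  | zero =>
    have := cover_step (k := R ⧸ m) (Finsupp.linearCombination R (fun _ : F.B 0 => (1 : R ⧸ I)))
      F.surj0 (fun z hz e => Ideal.Quotient.eq_zero_iff_mem.2
        (F.range_mem 0 z (by rw [F.hexact0]; exact hz) e))
      (Finsupp.linearCombination R (fun _ : G.B 0 => (1 : R ⧸ I)))
      G.surj0 (fun z hz e => Ideal.Quotient.eq_zero_iff_mem.2
        (G.range_mem 0 z (by rw [G.hexact0]; exact hz) e)) ⟨0, ⟨LinearEquiv.refl _ _⟩⟩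
    rwa [← F.hexact0, ← G.hexact0] at this
  | succ k ih =>
    have := cover_step (k := R ⧸ m) (M := LinearMap.range (Finsupp.linearCombination R (F.D k)))
      (M' := LinearMap.range (Finsupp.linearCombination R (G.D k)))
      (Finsupp.linearCombination R (F.D k)).rangeRestrict
      (LinearMap.surjective_rangeRestrict _) (fun z hz e => Ideal.Quotient.eq_zero_iff_mem.2
        (F.range_mem (k + 1) z (by rw [F.hexact]; simpa [Subtype.ext_iff] using hz) e))
      (Finsupp.linearCombination R (G.D k)).rangeRestrict
      (LinearMap.surjective_rangeRestrict _) (fun z hz e => Ideal.Quotient.eq_zero_iff_mem.2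
        (G.range_mem (k + 1) z (by rw [G.hexact]; simpa [Subtype.ext_iff] using hz) e)) ih.2
    rwa [LinearMap.ker_rangeRestrict, LinearMap.ker_rangeRestrict, ← F.hexact, ← G.hexact] at this
end SchanuelPart

section FramePart
variable {K : Type} [Field K] {E : Type} [PartialOrder E]

structure Stage (K : Type) [Field K] (E : Type) [PartialOrder E] (ρ : E → E) where
  B : Type
  fin : Fintype B
  deg : B → E
  hdeg : ∀ e, ρ (deg e) = deg e
  Z : E → Submodule K (B → K)
  mono : ∀ a b, a ≤ b → Z a ≤ Z b
  hρ : ∀ a, Z a ≤ Z (ρ a)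
  strict : ∀ a f, f ∈ Z a → ∀ e, f e ≠ 0 → deg e < a

attribute [instance] Stage.fin

structure StageStep {ρ : E → E} (S S' : Stage K E ρ) (w : S'.B → S.B → K) : Prop where
  hw : ∀ e, w e ∈ S.Z (S'.deg e)
  gen : ∀ a f, f ∈ S.Z a → ∃ g : S'.B → K, (∀ e, g e ≠ 0 → S'.deg e ≤ a) ∧ ∑ e, g e • w e = f
  hZ : ∀ a f, f ∈ S'.Z a ↔ (∀ e, f e ≠ 0 → S'.deg e ≤ a) ∧ ∑ e, f e • w e = 0

lemma stage_step [WellFoundedLT E] {ρ : E → E} (G : Finset E) (hG : ∀ a, ρ a ∈ G)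
    (hG' : ∀ a ∈ G, ρ a = a) (hle : ∀ a, ρ a ≤ a) (hmono : Monotone ρ) (S : Stage K E ρ) :
    ∃ (S' : Stage K E ρ) (w : S'.B → S.B → K), StageStep S S' w := by
  classical
  let Zlt : E → Submodule K (S.B → K) := fun a => ⨆ b, ⨆ (_ : b < a), S.Z b
  have hZlt : ∀ a, Zlt a ≤ S.Z a := fun a => iSup_le fun b => iSup_le fun h => S.mono _ _ h.le
  have hZlt' : ∀ a b, b < a → S.Z b ≤ Zlt a := fun a b h =>
    le_iSup_of_le b (le_iSup_of_le h le_rfl)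
  have hC : ∀ a, ∃ C : Submodule K (S.B → K), C ⊓ Zlt a = ⊥ ∧ C ⊔ Zlt a = S.Z a := by
    intro a
    obtain ⟨D, hD⟩ := exists_isCompl (Zlt a)
    refine ⟨D ⊓ S.Z a, ?_, ?_⟩
    · rw [eq_bot_iff, ← hD.inf_eq_bot]
      exact le_inf inf_le_right (inf_le_left.trans inf_le_left)
    · rw [sup_comm, ← sup_inf_assoc_of_le _ (hZlt a), hD.sup_eq_top, top_inf_eq]
  choose C hC1 hC2 using hC
  let bC : ∀ a, Module.Basis (Fin (Module.finrank K (C a))) K (C a) := fun a => Module.finBasis K (C a)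
  let B' : Type := Σ a : {a // a ∈ G}, Fin (Module.finrank K (C a.1))
  let deg' : B' → E := fun e => e.1.1
  let w : B' → S.B → K := fun e => (bC e.1.1 e.2 : S.B → K)
  have hCZ : ∀ a, C a ≤ S.Z a := fun a => by rw [← hC2 a]; exact le_sup_left
  have hwZ : ∀ e, w e ∈ S.Z (deg' e) := fun e => hCZ _ (bC e.1.1 e.2).2
  let Z' : E → Submodule K (B' → K) := fun a =>
    { carrier := {f | (∀ e, f e ≠ 0 → deg' e ≤ a) ∧ ∑ e, f e • w e = 0}
      zero_mem' := by simp
      add_mem' := by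
        rintro f g ⟨h1, h2⟩ ⟨h3, h4⟩
        refine ⟨fun e he => ?_, ?_⟩
        · by_cases hf : f e = 0
          · apply h3; intro hg; apply he; simp [hf, hg]
          · exact h1 e hf
        · simp [add_smul, Finset.sum_add_distrib, h2, h4]
      smul_mem' := by
        rintro c f ⟨h1, h2⟩
        refine ⟨fun e he => ?_, ?_⟩
        · apply h1; intro hf; apply he; simp [hf]
        · simp only [Pi.smul_apply, smul_assoc, ← Finset.smul_sum, h2, smul_zero] }
  have hZ' : ∀ a f, f ∈ Z' a ↔ (∀ e, f e ≠ 0 → deg' e ≤ a) ∧ ∑ e, f e • w e = 0 :=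
    fun a f => Iff.rfl
  have hspan : ∀ a, S.Z a ≤ Submodule.span K (w '' {e | deg' e ≤ a}) := by
    intro a
    induction a using WellFoundedLT.induction with
    | ind a ih =>
      refine (S.hρ a).trans ?_
      rw [← hC2 (ρ a)]
      refine sup_le ?_ ?_
      · intro x hx
        have := (bC (ρ a)).sum_repr ⟨x, hx⟩
        have h2 : x = ∑ i, (bC (ρ a)).repr ⟨x, hx⟩ i • (bC (ρ a) i : S.B → K) := by
          have h3 := congrArg (C (ρ a)).subtype this
          rw [map_sum] at h3
          simp only [map_smul, Submodule.subtype_apply] at h3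
          exact h3.symm
        rw [h2]
        refine Submodule.sum_mem _ fun i _ => Submodule.smul_mem _ _ (Submodule.subset_span ?_)
        exact ⟨⟨⟨ρ a, hG a⟩, i⟩, hle a, rfl⟩
      · refine iSup_le fun b => iSup_le fun hb => ?_
        have hba : b < a := hb.trans_le (hle a)
        refine (ih b hba).trans (Submodule.span_mono (Set.image_mono ?_))
        intro e he
        exact le_trans he hba.le
  refine ⟨⟨B', inferInstance, deg', fun e => hG' _ e.1.2, Z', ?_, ?_, ?_⟩, w, ⟨hwZ, ?_, hZ'⟩⟩
  · intro a b hab f hf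
    exact ⟨fun e he => (hf.1 e he).trans hab, hf.2⟩
  · intro a f hf
    refine ⟨fun e he => ?_, hf.2⟩
    have := hmono (hf.1 e he)
    rwa [hG' _ e.1.2] at this
  · rintro a f ⟨h1, h2⟩ ⟨⟨a', ha'⟩, i⟩ he
    refine lt_of_le_of_ne (h1 _ he) ?_
    rintro (rfl : a' = a)
    rw [Fintype.sum_sigma, ← Finset.add_sum_erase _ _ (Finset.mem_univ (⟨a', ha'⟩ : {a // a ∈ G}))] at h2
    have hx1 : ∑ j, f ⟨⟨a', ha'⟩, j⟩ • w ⟨⟨a', ha'⟩, j⟩ ∈ C a' :=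
      Submodule.sum_mem _ fun j _ => Submodule.smul_mem _ _ (bC a' j).2
    have hx2 : ∑ x ∈ Finset.univ.erase (⟨a', ha'⟩ : {a // a ∈ G}), ∑ j, f ⟨x, j⟩ • w ⟨x, j⟩ ∈ Zlt a' := by
      refine Submodule.sum_mem _ fun x hx => Submodule.sum_mem _ fun j _ => ?_
      by_cases h0 : f ⟨x, j⟩ = 0
      · rw [h0, zero_smul]; exact zero_mem _
      · refine Submodule.smul_mem _ _ (hZlt' _ _ (lt_of_le_of_ne (h1 _ h0) ?_) (hwZ ⟨x, j⟩))
        intro h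
        exact (Finset.ne_of_mem_erase hx) (Subtype.ext h)
    have hx3 : ∑ j, f ⟨⟨a', ha'⟩, j⟩ • w ⟨⟨a', ha'⟩, j⟩ ∈ C a' ⊓ Zlt a' := by
      refine ⟨hx1, ?_⟩
      rw [eq_neg_of_add_eq_zero_left h2]
      exact neg_mem hx2
    rw [hC1, Submodule.mem_bot] at hx3
    have hli := (bC a').linearIndependent
    rw [Fintype.linearIndependent_iff] at hli
    refine he (hli (fun j => f ⟨⟨a', ha'⟩, j⟩) ?_ i)
    apply Subtype.ext
    simpa using hx3
  · intro a f hf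
    have := hspan a hf
    rw [Finsupp.mem_span_image_iff_linearCombination] at this
    obtain ⟨l, hl, rfl⟩ := this
    refine ⟨l, fun e he => ?_, ?_⟩
    · rw [Finsupp.mem_supported] at hl
      exact hl (by simpa using he)
    · rw [Finsupp.linearCombination_apply, Finsupp.sum_fintype]
      simp

/-- multigraded frame -/
structure MFrame (K : Type) [Field K] (E : Type) [PartialOrder E] (U : E → Prop) where
  B : ℕ → Type
  fin : ∀ k, Fintype (B k)
  uniq : Unique (B 0)
  deg : ∀ k, B k → E
  w : ∀ k, B (k + 1) → B k → K
  hlt : ∀ k e e', w k e e' ≠ 0 → deg k e' < deg (k + 1) e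
  comp : ∀ k e, ∑ e', w (k + 1) e e' • w k e' = 0
  ex : ∀ k a (f : B (k + 1) → K), (∀ e, f e ≠ 0 → deg (k + 1) e ≤ a) → ∑ e, f e • w k e = 0 →
    ∃ g : B (k + 1 + 1) → K, (∀ e, g e ≠ 0 → deg (k + 1 + 1) e ≤ a) ∧ ∑ e, g e • w (k + 1) e = f
  ex0 : ∀ a (f : B 0 → K), U a →
    ∃ g : B 1 → K, (∀ e, g e ≠ 0 → deg 1 e ≤ a) ∧ ∑ e, g e • w 0 e = f
  gen0 : ∀ e e', w 0 e e' ≠ 0 → U (deg 1 e)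

attribute [instance] MFrame.fin

lemma exists_mframe [WellFoundedLT E] [OrderBot E] {ρ : E → E} (G : Finset E) (hG : ∀ a, ρ a ∈ G)
    (hG' : ∀ a ∈ G, ρ a = a) (hle : ∀ a, ρ a ≤ a) (hmono : Monotone ρ) (U : E → Prop)
    (hU : ∀ a b, a ≤ b → U a → U b) (hUρ : ∀ a, U a → U (ρ a)) (hU0 : ¬ U ⊥) :
    ∃ F : MFrame K E U, (∀ k e, ρ (F.deg k e) = F.deg k e) ∧ ∀ e, F.deg 0 e = ⊥ := by
  classical
  let S0 : Stage K E ρ :=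
    { B := Unit
      fin := inferInstance
      deg := fun _ => ⊥
      hdeg := fun _ => le_bot_iff.1 (hle _)
      Z := fun a => if U a then ⊤ else ⊥
      mono := by
        intro a b hab
        by_cases h : U a
        · simp [h, hU a b hab h]
        · simp [h]
      hρ := by
        intro a
        by_cases h : U a
        · simp [h, hUρ a h]
        · simp [h]
      strict := by
        intro a f hf e he
        by_cases h : U a
        · rw [bot_lt_iff_ne_bot]; rintro rfl; exact hU0 h
        · simp only [h, if_false, Submodule.mem_bot] at hf
          rw [hf] at he; exact absurd rfl he }
  choose nx nw hn using stage_step (K := K) G hG hG' hle hmono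
  let S : ℕ → Stage K E ρ := fun k => Nat.rec S0 (fun _ s => nx s) k
  have hS : ∀ k, StageStep (S k) (S (k + 1)) (nw (S k)) := fun k => hn (S k)
  refine ⟨{ B := fun k => (S k).B
            fin := fun k => (S k).fin
            uniq := inferInstanceAs (Unique Unit)
            deg := fun k => (S k).deg
            w := fun k => nw (S k)
            hlt := fun k e e' h => (S k).strict _ _ ((hS k).hw e) e' h
            comp := fun k e => (((hS k).hZ _ _).1 ((hS (k + 1)).hw e)).2
            ex := fun k a f h1 h2 => (hS (k + 1)).gen a f (((hS k).hZ a f).2 ⟨h1, h2⟩)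
            ex0 := fun a f h => (hS 0).gen a f ?_
            gen0 := ?_ }, fun k e => (S k).hdeg e, fun e => rfl⟩
  · show f ∈ (if U a then ⊤ else ⊥ : Submodule K (Unit → K))
    simp [h]
  · intro e e' h
    by_contra hc
    have := (hS 0).hw e
    have h2 : nw (S 0) e ∈ (if U ((S 1).deg e) then ⊤ else ⊥ : Submodule K (Unit → K)) := this
    rw [if_neg hc, Submodule.mem_bot] at h2
    apply h
    rw [h2]; rfl

/-- relabelling -/
def MFrame.relabel {E' : Type} [PartialOrder E'] {U : E → Prop} (F : MFrame K E U) (U' : E' → Prop)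
    (φ : E → E') (hφ : ∀ k e k' e', F.deg k e < F.deg k' e' → φ (F.deg k e) < φ (F.deg k' e'))
    (ψ : E' → E) (hψ : ∀ k e a, φ (F.deg k e) ≤ a ↔ F.deg k e ≤ ψ a)
    (hU : ∀ a, U' a → U (ψ a)) (hU' : ∀ k e, U (F.deg k e) → U' (φ (F.deg k e))) :
    MFrame K E' U' where
  B := F.B
  fin := F.fin
  uniq := F.uniq
  deg := fun k e => φ (F.deg k e)
  w := F.w
  hlt := fun k e e' h => hφ _ _ _ _ (F.hlt k e e' h)
  comp := F.comp
  ex := by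
    intro k a f h1 h2
    simp only [hψ] at h1 ⊢
    exact F.ex k _ f h1 h2
  ex0 := by
    intro a f h
    simp only [hψ]
    exact F.ex0 _ f (hU a h)
  gen0 := fun e e' h => hU' _ _ (F.gen0 e e' h)

end FramePart

section StrandPart
variable {K : Type} [Field K] {n : ℕ}

/-- strand of degree `a` -/
noncomputable def strand {B : Type} (deg : B → Fin n →₀ ℕ) (a : Fin n →₀ ℕ) :
    (B →₀ MvPolynomial (Fin n) K) →+ (B → K) where
  toFun z e := by classical exact if deg e ≤ a then coeff (a - deg e) (z e) else 0
  map_zero' := by ext e; simp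
  map_add' x y := by
    classical
    ext e
    by_cases h : deg e ≤ a <;> simp [h]

lemma strand_apply {B : Type} (deg : B → Fin n →₀ ℕ) (a : Fin n →₀ ℕ)
    (z : B →₀ MvPolynomial (Fin n) K) (e : B) [Decidable (deg e ≤ a)] :
    strand deg a z e = if deg e ≤ a then coeff (a - deg e) (z e) else 0 := by
  simp only [strand, AddMonoidHom.coe_mk, ZeroHom.coe_mk]
  congr

lemma strand_supp {B : Type} (deg : B → Fin n →₀ ℕ) (a : Fin n →₀ ℕ)
    (z : B →₀ MvPolynomial (Fin n) K) (e : B) (h : strand deg a z e ≠ 0) : deg e ≤ a := by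
  classical
  rw [strand_apply] at h
  by_contra hc
  simp [hc] at h

lemma strand_ext {B : Type} (deg : B → Fin n →₀ ℕ) (z z' : B →₀ MvPolynomial (Fin n) K)
    (h : ∀ a, strand deg a z = strand deg a z') : z = z' := by
  classical
  ext e m
  have := congrFun (h (m + deg e)) e
  simpa [strand_apply] using this

/-- multigraded matrix -/
noncomputable def frD {B B' : Type} [Fintype B] (deg : B → Fin n →₀ ℕ) (deg' : B' → Fin n →₀ ℕ)
    (w : B' → B → K) (e : B') : B →₀ MvPolynomial (Fin n) K :=
  Finsupp.equivFunOnFinite.symm fun e' => monomial (deg' e - deg e') (w e e')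

lemma strand_frD {B B' : Type} [Fintype B] [Fintype B'] (deg : B → Fin n →₀ ℕ)
    (deg' : B' → Fin n →₀ ℕ) (w : B' → B → K) (hlt : ∀ e e', w e e' ≠ 0 → deg e' < deg' e)
    (a : Fin n →₀ ℕ) (z : B' →₀ MvPolynomial (Fin n) K) :
    strand deg a (Finsupp.linearCombination _ (frD deg deg' w) z) =
      ∑ e, strand deg' a z e • w e := by
  classical
  ext e
  rw [strand_apply, Finsupp.linearCombination_apply, Finsupp.sum_fintype _ _ (by simp)]
  rw [Finsupp.finsetSum_apply, Finset.sum_apply]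
  simp only [Finsupp.smul_apply, smul_eq_mul, frD, Finsupp.equivFunOnFinite_symm_apply_apply,
    coeff_sum, coeff_mul_monomial', Pi.smul_apply, strand_apply]
  by_cases h : deg e ≤ a
  · rw [if_pos h]
    refine Finset.sum_congr rfl fun x _ => ?_
    by_cases hw : w x e = 0
    · simp [hw]
    · have h1 := (hlt x e hw).le
      have h2 : deg' x - deg e ≤ a - deg e ↔ deg' x ≤ a := tsub_le_tsub_iff_right h
      rw [tsub_tsub_tsub_cancel_right h1]
      simp [h2]
  · rw [if_neg h]
    symm
    refine Finset.sum_eq_zero fun x _ => ?_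
    by_cases hw : w x e = 0
    · simp [hw]
    · rw [if_neg (fun hc => h ((hlt x e hw).le.trans hc)), zero_mul]

lemma strand_lift {B : Type} [Fintype B] (deg : B → Fin n →₀ ℕ) (a b : Fin n →₀ ℕ) (f : B → K)
    (hf : ∀ e, f e ≠ 0 → deg e ≤ a) :
    strand deg b (Finsupp.equivFunOnFinite.symm fun e => monomial (a - deg e) (f e)) =
      if a = b then f else 0 := by
  classical
  ext e
  rw [strand_apply]
  simp only [Finsupp.equivFunOnFinite_symm_apply_apply, coeff_monomial]
  by_cases h0 : f e = 0
  · split_ifs <;> simp [h0]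
  · have h1 := hf e h0
    by_cases hab : a = b
    · subst hab; simp [h1]
    · rw [if_neg hab]
      by_cases h2 : deg e ≤ b
      · have : a - deg e ≠ b - deg e := by
          intro h; apply hab
          rw [← tsub_add_cancel_of_le h1, h, tsub_add_cancel_of_le h2]
        simp [h2, this]
      · simp [h2]

lemma mem_range_frD {B B' : Type} [Fintype B] [Fintype B'] (deg : B → Fin n →₀ ℕ)
    (deg' : B' → Fin n →₀ ℕ) (w : B' → B → K) (hlt : ∀ e e', w e e' ≠ 0 → deg e' < deg' e)
    (z : B →₀ MvPolynomial (Fin n) K)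
    (h : ∀ a, strand deg a z ≠ 0 → ∃ g : B' → K, (∀ e, g e ≠ 0 → deg' e ≤ a) ∧
      ∑ e, g e • w e = strand deg a z) :
    z ∈ LinearMap.range (Finsupp.linearCombination (MvPolynomial (Fin n) K) (frD deg deg' w)) := by
  classical
  have h' : ∀ a, ∃ g : B' → K, (∀ e, g e ≠ 0 → deg' e ≤ a) ∧ ∑ e, g e • w e = strand deg a z := by
    intro a
    by_cases h0 : strand deg a z = 0
    · exact ⟨0, by simp, by simp [h0]⟩
    · exact h a h0
  choose g hg1 hg2 using h'
  let A : Finset (Fin n →₀ ℕ) := Finset.univ.biUnion fun e => (z e).support.image (· + deg e)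
  have hA : ∀ a, a ∉ A → strand deg a z = 0 := by
    intro a ha
    ext e
    rw [strand_apply, Pi.zero_apply]
    split_ifs with hle
    · by_contra hc
      apply ha
      simp only [A, Finset.mem_biUnion, Finset.mem_univ, true_and, Finset.mem_image, mem_support_iff]
      exact ⟨e, a - deg e, hc, tsub_add_cancel_of_le hle⟩
    · rfl
  refine ⟨∑ a ∈ A, Finsupp.equivFunOnFinite.symm fun e => monomial (a - deg' e) (g a e), ?_⟩
  apply strand_ext deg
  intro b
  rw [strand_frD deg deg' w hlt, map_sum]
  simp only [strand_lift deg' _ b _ (hg1 _)]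
  rw [Finset.sum_ite_eq']
  by_cases hb : b ∈ A
  · simp only [hb, if_true, hg2]
  · simp [hb, hA b hb]

abbrev upSet {q : ℕ} (u : Fin q → Fin n →₀ ℕ) : (Fin n →₀ ℕ) → Prop := fun a => ∃ j, u j ≤ a

lemma mem_mIdeal_of_coeff (p : MvPolynomial (Fin n) K) (h : coeff 0 p = 0) : p ∈ mIdeal K n := by
  rw [mIdeal, ← Set.image_univ, mem_ideal_span_X_image]
  intro m hm
  by_contra hc
  push Not at hc
  have : m = 0 := by ext i; simpa using hc i
  subst this
  simp [h] at hm

lemma mem_monIdeal_iff {q : ℕ} (u : Fin q → Fin n →₀ ℕ) (p : MvPolynomial (Fin n) K) :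
    p ∈ monIdeal K u ↔ ∀ m, coeff m p ≠ 0 → upSet u m := by
  have : (Set.range fun j => monomial (u j) (1 : K)) = (fun s => monomial s (1 : K)) '' (Set.range u) := by
    rw [← Set.range_comp]; rfl
  rw [monIdeal, this, mem_ideal_span_monomial_image]
  simp [upSet]

/-- resolution from a frame -/
noncomputable def MFrame.toPreRes {q : ℕ} {u : Fin q → Fin n →₀ ℕ} (F : MFrame K (Fin n →₀ ℕ) (upSet u))
    (h0 : ∀ e, F.deg 0 e = 0) : PreRes (MvPolynomial (Fin n) K) (mIdeal K n) (monIdeal K u) where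
  B := F.B
  fin := F.fin
  uniq := F.uniq
  D k := frD (F.deg k) (F.deg (k + 1)) (F.w k)
  hmin k e e' := by
    simp only [frD, Finsupp.equivFunOnFinite_symm_apply_apply]
    apply mem_mIdeal_of_coeff
    classical
    rw [coeff_monomial]
    by_cases h : F.w k e e' = 0
    · simp [h]
    · rw [if_neg]
      have := F.hlt k e e' h
      intro hc
      rw [tsub_eq_zero_iff_le] at hc
      exact absurd this hc.not_gt
  hexact k := by
    apply le_antisymm
    · rintro _ ⟨y, rfl⟩
      rw [LinearMap.mem_ker]
      apply strand_ext (F.deg k)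
      intro a
      rw [strand_frD _ _ _ (F.hlt k), strand_frD _ _ _ (F.hlt (k + 1)), map_zero]
      simp only [Finset.sum_apply, Pi.smul_apply, Finset.sum_smul]
      rw [Finset.sum_comm]
      apply Finset.sum_eq_zero
      intro e _
      simp only [smul_assoc, ← Finset.smul_sum]
      rw [F.comp, smul_zero]
    · intro z hz
      rw [LinearMap.mem_ker] at hz
      apply mem_range_frD _ _ _ (F.hlt (k + 1))
      intro a _
      apply F.ex k a _ (strand_supp _ _ _)
      rw [← strand_frD _ _ _ (F.hlt k), hz, map_zero]
  hexact0 := by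
    have hk : ∀ z : F.B 0 →₀ MvPolynomial (Fin n) K, z ∈ LinearMap.ker (Finsupp.linearCombination (MvPolynomial (Fin n) K) (fun _ : F.B 0 => (1 : MvPolynomial (Fin n) K ⧸ monIdeal K u))) ↔ z F.uniq.default ∈ monIdeal K u := by
      intro z
      let _ := F.uniq
      rw [LinearMap.mem_ker, Finsupp.linearCombination_unique]
      have : z default • (1 : MvPolynomial (Fin n) K ⧸ monIdeal K u) =
          Ideal.Quotient.mk _ (z default * 1) := rfl
      rw [this, mul_one]
      exact Ideal.Quotient.eq_zero_iff_mem
    apply le_antisymm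
    · rintro _ ⟨y, rfl⟩
      rw [hk, Finsupp.linearCombination_apply, Finsupp.sum, Finsupp.finsetSum_apply]
      refine Ideal.sum_mem _ fun e _ => ?_
      rw [Finsupp.smul_apply, smul_eq_mul]
      apply Ideal.mul_mem_left
      simp only [frD, Finsupp.equivFunOnFinite_symm_apply_apply, h0, tsub_zero]
      rw [mem_monIdeal_iff]
      classical
      intro m hm
      rw [coeff_monomial] at hm
      split_ifs at hm with h
      · rw [← h]; exact F.gen0 _ _ hm
      · exact absurd rfl hm
    · intro z hz
      rw [hk, mem_monIdeal_iff] at hz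
      apply mem_range_frD _ _ _ (F.hlt 0)
      intro a ha
      apply F.ex0
      obtain ⟨e, he⟩ := Function.ne_iff.1 ha
      classical
      rw [strand_apply] at he
      let _ := F.uniq
      apply hz
      rw [h0, Unique.eq_default e] at he
      simpa using he

end StrandPart

section ResPart
variable {K : Type} [Field K] {n : ℕ}

lemma resBas_finite {I : Ideal (MvPolynomial (Fin n) K)} (F : MinFreeRes K n I) (k : ℕ) :
    Finite (resBas F.b k) := by
  have h := F.hfin
  let f : resBas F.b k → Σ s : (Function.support fun kj : ℕ × ℕ => F.b kj.1 kj.2), Fin (F.b s.1.1 s.1.2) :=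
    fun e => ⟨⟨(k, e.1), fun h0 => Fin.elim0 (h0 ▸ e.2)⟩, e.2⟩
  have : Finite (Function.support fun kj : ℕ × ℕ => F.b kj.1 kj.2) := h
  refine Finite.of_injective f ?_
  rintro ⟨j, t⟩ ⟨j', t'⟩ hh
  simp only [f, Sigma.mk.injEq] at hh
  obtain ⟨h1, h2⟩ := hh
  have h3 : j = j' := congrArg (fun s => s.1.2) h1
  subst h3
  rw [eq_of_heq h2]

/-- forget grading -/
noncomputable def MinFreeRes.toPreRes {I : Ideal (MvPolynomial (Fin n) K)} (F : MinFreeRes K n I) :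
    PreRes (MvPolynomial (Fin n) K) (mIdeal K n) I where
  B k := resBas F.b k
  fin k := by
    have := resBas_finite F k
    exact Fintype.ofFinite _
  uniq := by
    refine ⟨⟨⟨0, ⟨0, by rw [F.hb0]; simp⟩⟩⟩, ?_⟩
    rintro ⟨j, t⟩
    have h1 := t.2
    have h0 := F.hb0 j
    by_cases hj : j = 0
    · subst hj
      congr 1
      apply Fin.ext
      rw [if_pos rfl] at h0
      show t.1 = 0
      omega
    · rw [if_neg hj] at h0; omega
  D := F.D
  hmin k e e' := by
    rcases F.hhom k e e' with h | ⟨h1, h2⟩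
    · rw [h]; exact zero_mem _
    · apply mem_mIdeal_of_coeff
      apply h2.coeff_eq_zero
      simp; omega
  hexact := F.hexact
  hexact0 := F.hexact0

lemma MinFreeRes.card_one {I : Ideal (MvPolynomial (Fin n) K)} (F : MinFreeRes K n I) (j₀ : ℕ)
    (h1 : F.b F.len j₀ = 1) (h2 : ∀ j, F.b F.len j ≠ 0 → j = j₀) :
    Fintype.card (F.toPreRes.B F.len) = 1 := by
  rw [Fintype.card_eq_one_iff]
  refine ⟨⟨j₀, ⟨0, by omega⟩⟩, ?_⟩
  rintro ⟨j, t⟩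
  have : j = j₀ := h2 j (fun h => by have := t.2; omega)
  subst this
  congr 1
  apply Fin.ext
  have := t.2
  show t.1 = 0
  omega

lemma MinFreeRes.card_zero {I : Ideal (MvPolynomial (Fin n) K)} (F : MinFreeRes K n I) (k : ℕ)
    (hk : F.len < k) : Fintype.card (F.toPreRes.B k) = 0 := by
  rw [Fintype.card_eq_zero_iff]
  refine ⟨fun e => ?_⟩
  obtain ⟨j, t⟩ := e
  have h1 := t.2
  have h2 := F.htop k hk j
  omega

lemma lc_transport {R : Type} [CommRing R] {A A' B B' : Type} (a : A ≃ A') (b : B ≃ B')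
    (D : A → (B →₀ R)) (x : A →₀ R) :
    resMap (fun e => (Finsupp.domLCongr b : (B →₀ R) ≃ₗ[R] (B' →₀ R)) (D (a.symm e)))
      ((Finsupp.domLCongr a : (A →₀ R) ≃ₗ[R] (A' →₀ R)) x)
      = (Finsupp.domLCongr b : (B →₀ R) ≃ₗ[R] (B' →₀ R)) (Finsupp.linearCombination R D x) := by
  induction x using Finsupp.induction_linear with
  | zero => simp
  | add x y hx hy => simp only [map_add, hx, hy]
  | single e r =>
    rw [Finsupp.domLCongr_single, resMap, Finsupp.linearCombination_single,
      Finsupp.linearCombination_single, map_smul]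
    simp

lemma range_ker_transport {R : Type} [CommRing R] {A A' B B' C C' : Type} (a : A ≃ A') (b : B ≃ B')
    (c : C ≃ C') (D : A → (B →₀ R)) (D' : B → (C →₀ R))
    (h : LinearMap.range (Finsupp.linearCombination R D) = LinearMap.ker (Finsupp.linearCombination R D')) :
    LinearMap.range (resMap (fun e => (Finsupp.domLCongr b : (B →₀ R) ≃ₗ[R] (B' →₀ R)) (D (a.symm e)))) =
    LinearMap.ker (resMap (fun e => (Finsupp.domLCongr c : (C →₀ R) ≃ₗ[R] (C' →₀ R)) (D' (b.symm e)))) := by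
  ext z
  obtain ⟨y, rfl⟩ := (Finsupp.domLCongr b : (B →₀ R) ≃ₗ[R] (B' →₀ R)).surjective z
  rw [LinearMap.mem_ker, lc_transport, LinearEquiv.map_eq_zero_iff, ← LinearMap.mem_ker, ← h]
  constructor
  · rintro ⟨x, hx⟩
    obtain ⟨x, rfl⟩ := (Finsupp.domLCongr a : (A →₀ R) ≃ₗ[R] (A' →₀ R)).surjective x
    rw [lc_transport] at hx
    exact ⟨x, (LinearEquiv.injective _) hx⟩
  · rintro ⟨x, rfl⟩
    exact ⟨_, lc_transport a b D x⟩

variable {q : ℕ} {u : Fin q → Fin n →₀ ℕ} (F : MFrame K (Fin n →₀ ℕ) (upSet u))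

/-- graded Betti numbers -/
noncomputable def MFrame.bt (k j : ℕ) : ℕ := Fintype.card {e : F.B k // (F.deg k e).degree = j}

noncomputable def MFrame.eqv (k : ℕ) : F.B k ≃ resBas F.bt k :=
  (Equiv.sigmaFiberEquiv fun e : F.B k => (F.deg k e).degree).symm.trans
    (Equiv.sigmaCongrRight fun j => Fintype.equivFin {e : F.B k // (F.deg k e).degree = j})

lemma MFrame.eqv_fst (k : ℕ) (e : F.B k) : (F.eqv k e).1 = (F.deg k e).degree := rfl

lemma degree_tsub_of_le (a b : Fin n →₀ ℕ) (h : a ≤ b) : (b - a).degree = b.degree - a.degree := by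
  obtain ⟨c, rfl⟩ := exists_add_of_le h
  simp

lemma degree_lt_of_lt (a b : Fin n →₀ ℕ) (h : a < b) : a.degree < b.degree := by
  obtain ⟨c, rfl⟩ := exists_add_of_le h.le
  have : c ≠ 0 := by rintro rfl; simp at h
  have h2 : c.degree ≠ 0 := by rwa [Ne, Finsupp.degree_eq_zero_iff]
  simp; omega

noncomputable def MFrame.toMin (h0 : ∀ e, F.deg 0 e = 0) (g : ℕ) (hg : ∀ k, g < k → IsEmpty (F.B k)) :
    MinFreeRes K n (monIdeal K u) where
  len := g
  b := F.bt
  hb0 j := by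
    let _ := F.uniq
    rw [MFrame.bt]
    simp only [h0]
    split_ifs with h
    · subst h
      simp
    · rw [Fintype.card_eq_zero_iff]
      refine ⟨fun e => h ?_⟩
      rw [← e.2]; simp
  htop k hk j := by
    have := hg k hk
    rw [MFrame.bt, Fintype.card_eq_zero_iff]
    exact ⟨fun e => this.false e.1⟩
  hfin := by
    refine (Set.finite_range (fun s : Σ k : Fin (g + 1), F.B k => ((s.1 : ℕ), (F.deg _ s.2).degree))).subset ?_
    rintro ⟨k, j⟩ h
    simp only [Function.mem_support, MFrame.bt] at h
    obtain ⟨e⟩ := Fintype.card_pos_iff.1 (Nat.pos_of_ne_zero h)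
    have hk : k < g + 1 := by
      by_contra hc
      exact (hg k (by omega)).false e.1
    exact ⟨⟨⟨k, hk⟩, e.1⟩, by simp [e.2]⟩
  D k e := (Finsupp.domLCongr (F.eqv k) : (F.B k →₀ MvPolynomial (Fin n) K) ≃ₗ[MvPolynomial (Fin n) K] _)
    ((F.toPreRes h0).D k ((F.eqv (k + 1)).symm e))
  hhom k e e' := by
    obtain ⟨e, rfl⟩ := (F.eqv (k + 1)).surjective e
    obtain ⟨e', rfl⟩ := (F.eqv k).surjective e'
    rw [Equiv.symm_apply_apply, MFrame.eqv_fst, MFrame.eqv_fst]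
    have : (Finsupp.domLCongr (F.eqv k) : (F.B k →₀ MvPolynomial (Fin n) K) ≃ₗ[MvPolynomial (Fin n) K] _)
        ((F.toPreRes h0).D k e) (F.eqv k e') =
        monomial (F.deg (k + 1) e - F.deg k e') (F.w k e e') := by
      simp [MFrame.toPreRes, frD]
    rw [this]
    by_cases hw : F.w k e e' = 0
    · left; simp [hw]
    · right
      have hl := F.hlt k e e' hw
      exact ⟨degree_lt_of_lt _ _ hl, isHomogeneous_monomial _ (degree_tsub_of_le _ _ hl.le)⟩
  hexact k := range_ker_transport _ _ _ _ _ ((F.toPreRes h0).hexact k)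
  hexact0 := by
    let _ := F.uniq
    let _ : Unique (resBas F.bt 0) := (F.eqv 0).symm.unique
    have h := (F.toPreRes h0).hexact0
    ext z
    obtain ⟨y, rfl⟩ := (Finsupp.domLCongr (F.eqv 0) : (F.B 0 →₀ MvPolynomial (Fin n) K) ≃ₗ[MvPolynomial (Fin n) K] _).surjective z
    have h1 : (Finsupp.linearCombination (MvPolynomial (Fin n) K) (fun _ : resBas F.bt 0 => (1 : MvPolynomial (Fin n) K ⧸ monIdeal K u)))
      ((Finsupp.domLCongr (F.eqv 0) : (F.B 0 →₀ MvPolynomial (Fin n) K) ≃ₗ[MvPolynomial (Fin n) K] _) y) =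
      (Finsupp.linearCombination (MvPolynomial (Fin n) K) (fun _ : F.B 0 => (1 : MvPolynomial (Fin n) K ⧸ monIdeal K u))) y := by
      induction y using Finsupp.induction_linear with
      | zero => simp
      | add x y hx hy => simp only [map_add, hx, hy]
      | single e r => simp
    rw [LinearMap.mem_ker, h1, ← LinearMap.mem_ker]
    have h2 := SetLike.ext_iff.1 h y
    refine Iff.trans ?_ h2
    constructor
    · rintro ⟨x, hx⟩
      obtain ⟨x, rfl⟩ := (Finsupp.domLCongr (F.eqv 1) : (F.B 1 →₀ MvPolynomial (Fin n) K) ≃ₗ[MvPolynomial (Fin n) K] _).surjective x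
      have h3 := (lc_transport (F.eqv 1) (F.eqv 0) ((F.toPreRes h0).D 0) x).symm.trans hx
      exact ⟨x, (LinearEquiv.injective _) h3⟩
    · rintro ⟨x, rfl⟩
      exact ⟨_, lc_transport (F.eqv 1) (F.eqv 0) ((F.toPreRes h0).D 0) x⟩

lemma MFrame.toMin_rank (h0 : ∀ e, F.deg 0 e = 0) (g : ℕ) (hg : ∀ k, g < k → IsEmpty (F.B k))
    (h1 : Fintype.card (F.B g) = 1) : ∃ j₀ : ℕ, (F.toMin h0 g hg).b (F.toMin h0 g hg).len j₀ = 1 ∧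
    ∀ j, (F.toMin h0 g hg).b (F.toMin h0 g hg).len j ≠ 0 → j = j₀ := by
  obtain ⟨e, he⟩ := Fintype.card_eq_one_iff.1 h1
  refine ⟨(F.deg g e).degree, ?_, ?_⟩
  · show Fintype.card _ = 1
    rw [Fintype.card_eq_one_iff]
    exact ⟨⟨e, rfl⟩, fun y => Subtype.ext (he _)⟩
  · intro j hj
    obtain ⟨y⟩ := Fintype.card_pos_iff.1 (Nat.pos_of_ne_zero hj)
    rw [← y.2]
    congr 2
    exact he y.1
end ResPart

section GridPart

def gr (V : Finset ℕ) (a : ℕ) : ℕ := (V.filter (· ≤ a)).sup id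
def gf (V : Finset ℕ) (a : ℕ) : ℕ := (V.filter (· < a)).card
def gs (V : Finset ℕ) (b : ℕ) : ℕ := (V.filter (fun x => gf V x ≤ b)).sup id

lemma sup_filter_mem (V : Finset ℕ) (P : ℕ → Prop) [DecidablePred P] (h0 : 0 ∈ V) (hP : P 0) :
    (V.filter P).sup id ∈ V.filter P := by
  have h : 0 ∈ V.filter P := Finset.mem_filter.2 ⟨h0, hP⟩
  obtain ⟨x, hx, h2⟩ := Finset.exists_mem_eq_sup _ ⟨0, h⟩ (id : ℕ → ℕ)
  rw [h2]; exact hx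

lemma gf_zero (V : Finset ℕ) : gf V 0 = 0 := by simp [gf]

lemma gr_mem (V : Finset ℕ) (h0 : 0 ∈ V) (a : ℕ) : gr V a ∈ V ∧ gr V a ≤ a := by
  have := sup_filter_mem V (· ≤ a) h0 (Nat.zero_le a)
  rwa [Finset.mem_filter] at this

lemma le_gr (V : Finset ℕ) {x a : ℕ} (hx : x ∈ V) (h : x ≤ a) : x ≤ gr V a :=
  Finset.le_sup (f := id) (Finset.mem_filter.2 ⟨hx, h⟩)

lemma gr_eq (V : Finset ℕ) (h0 : 0 ∈ V) {a : ℕ} (ha : a ∈ V) : gr V a = a :=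
  le_antisymm (gr_mem V h0 a).2 (le_gr V ha le_rfl)

lemma gr_mono (V : Finset ℕ) (h0 : 0 ∈ V) {a b : ℕ} (h : a ≤ b) : gr V a ≤ gr V b :=
  le_gr V (gr_mem V h0 a).1 ((gr_mem V h0 a).2.trans h)

lemma gf_mono (V : Finset ℕ) {a b : ℕ} (h : a ≤ b) : gf V a ≤ gf V b := by
  apply Finset.card_le_card
  intro x hx
  rw [Finset.mem_filter] at hx ⊢
  exact ⟨hx.1, hx.2.trans_le h⟩

lemma gf_strict (V : Finset ℕ) {a b : ℕ} (ha : a ∈ V) (h : a < b) : gf V a < gf V b := by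
  apply Finset.card_lt_card
  refine ⟨fun x hx => ?_, fun hc => ?_⟩
  · rw [Finset.mem_filter] at hx ⊢
    exact ⟨hx.1, hx.2.trans h⟩
  · have := hc (Finset.mem_filter.2 ⟨ha, h⟩)
    simp at this

lemma gs_iff (V : Finset ℕ) (h0 : 0 ∈ V) {x : ℕ} (hx : x ∈ V) (b : ℕ) : gf V x ≤ b ↔ x ≤ gs V b := by
  constructor
  · intro h
    exact Finset.le_sup (f := id) (Finset.mem_filter.2 ⟨hx, h⟩)
  · intro h
    have := sup_filter_mem V (fun x => gf V x ≤ b) h0 (by rw [gf_zero]; exact Nat.zero_le b)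
    exact (gf_mono V h).trans (Finset.mem_filter.1 this).2

variable {K : Type} [Field K] {n q : ℕ}

lemma exists_two_frames (v : Fin q → Fin n →₀ ℕ) (h0 : ∀ i, ∃ j, v j i = 0) (hne : ∀ j, v j ≠ 0) :
    ∃ (F : MFrame K (Fin n →₀ ℕ) (upSet v)) (F' : MFrame K (Fin n →₀ ℕ) (upSet (sgnExp v))),
      (∀ e, F.deg 0 e = 0) ∧ (∀ e, F'.deg 0 e = 0) ∧
      ∀ k, Fintype.card (F.B k) = Fintype.card (F'.B k) := by
  classical
  let V : Fin n → Finset ℕ := fun i => Finset.univ.image fun k : Fin q => v k i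
  have hV0 : ∀ i, 0 ∈ V i := fun i => by
    obtain ⟨j, hj⟩ := h0 i
    exact Finset.mem_image.2 ⟨j, Finset.mem_univ _, hj⟩
  have hVv : ∀ i j, v j i ∈ V i := fun i j => Finset.mem_image.2 ⟨j, Finset.mem_univ _, rfl⟩
  let ρ : (Fin n →₀ ℕ) → (Fin n →₀ ℕ) := fun a => Finsupp.equivFunOnFinite.symm fun i => gr (V i) (a i)
  let φ : (Fin n →₀ ℕ) → (Fin n →₀ ℕ) := fun a => Finsupp.equivFunOnFinite.symm fun i => gf (V i) (a i)
  let ψ : (Fin n →₀ ℕ) → (Fin n →₀ ℕ) := fun a => Finsupp.equivFunOnFinite.symm fun i => gs (V i) (a i)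
  have hφv : ∀ j, sgnExp v j = φ (v j) := fun j => rfl
  let G : Finset (Fin n →₀ ℕ) := (Fintype.piFinset V).map Finsupp.equivFunOnFinite.symm.toEmbedding
  have hG : ∀ a, a ∈ G ↔ ∀ i, a i ∈ V i := by
    intro a
    simp only [G, Finset.mem_map_equiv, Fintype.mem_piFinset, Equiv.symm_symm]
    rfl
  obtain ⟨F, hF1, hF2⟩ := exists_mframe (K := K) (ρ := ρ) G
    (fun a => (hG _).2 fun i => (gr_mem (V i) (hV0 i) (a i)).1)
    (fun a ha => by ext i; exact gr_eq (V i) (hV0 i) ((hG a).1 ha i))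
    (fun a i => (gr_mem (V i) (hV0 i) (a i)).2)
    (fun a b h i => gr_mono (V i) (hV0 i) (h i)) (upSet v)
    (fun a b h ⟨j, hj⟩ => ⟨j, hj.trans h⟩)
    (fun a ⟨j, hj⟩ => ⟨j, fun i => le_gr (V i) (hVv i j) (hj i)⟩)
    (fun ⟨j, hj⟩ => hne j (le_bot_iff.1 hj))
  have hgrid : ∀ k e i, F.deg k e i ∈ V i := by
    intro k e i
    rw [← hF1 k e]
    exact (gr_mem (V i) (hV0 i) _).1
  refine ⟨F, F.relabel (upSet (sgnExp v)) φ ?_ ψ ?_ ?_ ?_, hF2, ?_, ?_⟩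
  · intro k e k' e' h
    obtain ⟨h1, i, hi⟩ := Finsupp.lt_def.1 h
    exact Finsupp.lt_def.2 ⟨fun i => gf_mono (V i) (h1 i), i, gf_strict (V i) (hgrid k e i) hi⟩
  · intro k e a
    exact forall_congr' fun i => gs_iff (V i) (hV0 i) (hgrid k e i) (a i)
  · rintro a ⟨j, hj⟩
    exact ⟨j, fun i => (gs_iff (V i) (hV0 i) (hVv i j) (a i)).1 (hj i)⟩
  · rintro k e ⟨j, hj⟩
    exact ⟨j, fun i => gf_mono (V i) (hj i)⟩
  · intro e
    show φ (F.deg 0 e) = 0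
    rw [hF2 e]
    ext i
    exact gf_zero (V i)
  · intro k
    rfl

/-- same Krull dimension -/
lemma krullDim_eq (v : Fin q → Fin n →₀ ℕ) (h0 : ∀ i, ∃ j, v j i = 0) :
    ringKrullDim (MvPolynomial (Fin n) K ⧸ monIdeal K v) =
    ringKrullDim (MvPolynomial (Fin n) K ⧸ monIdeal K (sgnExp v)) := by
  rw [ringKrullDim_quotient, ringKrullDim_quotient]
  have key : ∀ (p : PrimeSpectrum (MvPolynomial (Fin n) K)) (u : Fin q → Fin n →₀ ℕ),
      p ∈ PrimeSpectrum.zeroLocus (monIdeal K u : Set (MvPolynomial (Fin n) K)) ↔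
      ∀ j, ∃ i, u j i ≠ 0 ∧ (X i : MvPolynomial (Fin n) K) ∈ p.asIdeal := by
    intro p u
    rw [PrimeSpectrum.mem_zeroLocus, SetLike.coe_subset_coe, monIdeal, Ideal.span_le, Set.range_subset_iff]
    refine forall_congr' fun j => ?_
    rw [SetLike.mem_coe, monomial_eq, C_1, one_mul, Finsupp.prod, p.2.prod_mem_iff]
    constructor
    · rintro ⟨i, hi, h⟩
      exact ⟨i, by simpa using hi, p.2.mem_of_pow_mem _ h⟩
    · rintro ⟨i, hi, h⟩
      exact ⟨i, by simpa using hi, Ideal.pow_mem_of_mem _ h _ (Nat.pos_of_ne_zero hi)⟩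
  have hs : ∀ j i, sgnExp v j i ≠ 0 ↔ v j i ≠ 0 := by
    intro j i
    rw [not_iff_not]
    simp only [sgnExp, Finsupp.equivFunOnFinite_symm_apply_apply, Finset.card_eq_zero]
    constructor
    · intro h
      obtain ⟨k, hk⟩ := h0 i
      by_contra hc
      have : 0 ∈ (Finset.univ.image fun k : Fin q => v k i).filter fun m => m < v j i :=
        Finset.mem_filter.2 ⟨Finset.mem_image.2 ⟨k, Finset.mem_univ _, hk⟩, Nat.pos_of_ne_zero hc⟩
      rw [h] at this
      simp at this
    · intro h
      simp [h]
  have : PrimeSpectrum.zeroLocus (monIdeal K v : Set (MvPolynomial (Fin n) K)) =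
      PrimeSpectrum.zeroLocus (monIdeal K (sgnExp v) : Set (MvPolynomial (Fin n) K)) := by
    ext p
    rw [key, key]
    simp only [hs]
  rw [this]

lemma zero_mem_rows (v : Fin q → Fin n →₀ ℕ) (hht : (2 : ℕ∞) ≤ heightOf (monIdeal K v)) (i : Fin n) :
    ∃ j, v j i = 0 := by
  by_contra! hc
  have hprime : (Ideal.span {(X i : MvPolynomial (Fin n) K)}).IsPrime := by
    rw [Ideal.span_singleton_prime (X_ne_zero i)]
    exact X_prime
  have hle : monIdeal K v ≤ Ideal.span {(X i : MvPolynomial (Fin n) K)} := by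
    rw [monIdeal, Ideal.span_le, Set.range_subset_iff]
    intro j
    rw [SetLike.mem_coe, Ideal.mem_span_singleton, X, monomial_dvd_monomial]
    simp
    exact Nat.one_le_iff_ne_zero.2 (hc j)
  have h1 : heightOf (monIdeal K v) ≤ Order.height (⟨_, hprime⟩ : PrimeSpectrum (MvPolynomial (Fin n) K)) :=
    iInf₂_le (⟨_, hprime⟩ : PrimeSpectrum (MvPolynomial (Fin n) K)) hle
  have h2 : Order.height (⟨_, hprime⟩ : PrimeSpectrum (MvPolynomial (Fin n) K)) ≤ 1 := by
    have := Ideal.height_le_one_of_isPrincipal_of_mem_minimalPrimes (Ideal.span {(X i : MvPolynomial (Fin n) K)}) (Ideal.span {(X i : MvPolynomial (Fin n) K)}) (by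
      rw [Ideal.minimalPrimes_eq_subsingleton_self]; rfl)
    rw [← PrimeSpectrum.height_eq_orderHeight]
    exact this
  have := hht.trans (h1.trans h2)
  exact absurd this (by decide)
end GridPart

section DepthPart
open CategoryTheory CategoryTheory.Abelian RingTheory.Sequence

variable {R : Type} [CommRing R]

/-- `Ext` pattern -/
structure ExtPat (κ : ModuleCat.{0} R) (n s : ℕ) (M : Type) [AddCommGroup M] [Module R M] : Prop where
  le : s ≤ n
  van : ∀ i < n - s, Subsingleton (Ext κ (ModuleCat.of R M) i)
  non : ¬ Subsingleton (Ext κ (ModuleCat.of R M) (n - s))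
  iso : s = 0 → Nonempty (M ≃ₗ[R] R)

lemma ext_subsingleton_congr {κ : ModuleCat.{0} R} {M M' : Type} [AddCommGroup M] [Module R M]
    [AddCommGroup M'] [Module R M'] (e : M ≃ₗ[R] M') (i : ℕ)
    (h : Subsingleton (Ext κ (ModuleCat.of R M') i)) : Subsingleton (Ext κ (ModuleCat.of R M) i) := by
  refine ⟨fun x y => ?_⟩
  have key : ∀ x : Ext κ (ModuleCat.of R M) i, x = 0 := by
    intro x
    have h1 : (x.comp (Ext.mk₀ (ModuleCat.ofHom e.toLinearMap)) (add_zero i)) = 0 := Subsingleton.elim _ _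
    have h2 : ModuleCat.ofHom e.toLinearMap ≫ ModuleCat.ofHom e.symm.toLinearMap = 𝟙 (ModuleCat.of R M) := by
      ext m; simp
    have h3 : (x.comp (Ext.mk₀ (ModuleCat.ofHom e.toLinearMap)) (add_zero i)).comp
        (Ext.mk₀ (ModuleCat.ofHom e.symm.toLinearMap)) (add_zero i) = x := by
      rw [Ext.comp_assoc_of_second_deg_zero, Ext.mk₀_comp_mk₀, h2, Ext.comp_mk₀_id]
    rw [← h3, h1, Ext.zero_comp]
  rw [key x, key y]

lemma ExtPat.congr {κ : ModuleCat.{0} R} {n s : ℕ} {M M' : Type} [AddCommGroup M] [Module R M]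
    [AddCommGroup M'] [Module R M'] (e : M ≃ₗ[R] M') (h : ExtPat κ n s M) : ExtPat κ n s M' where
  le := h.le
  van i hi := ext_subsingleton_congr e.symm i (h.van i hi)
  non hc := h.non (ext_subsingleton_congr e _ hc)
  iso h0 := (h.iso h0).map fun f => e.symm.trans f

lemma ext_smul_zero {m : Ideal R} (r : R) (hr : r ∈ m) (M : ModuleCat.{0} R) (i : ℕ)
    (x : Ext (ModuleCat.of R (R ⧸ m)) M i) : r • x = 0 := by
  have h0 : r • 𝟙 (ModuleCat.of R (R ⧸ m)) = 0 := by
    refine ModuleCat.hom_ext (LinearMap.ext fun y => ?_)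
    obtain ⟨y, rfl⟩ := Submodule.Quotient.mk_surjective _ y
    show r • (Submodule.Quotient.mk y : R ⧸ m) = 0
    rw [← Submodule.Quotient.mk_smul, Submodule.Quotient.mk_eq_zero]
    exact m.mul_mem_right y hr
  have : r • x = (Ext.mk₀ (r • 𝟙 _)).comp x (zero_add i) := by simp [Ext.mk₀_smul]
  rw [this, h0]
  simp

lemma ext_step {m : Ideal R} {n s : ℕ} {B M : Type} [Fintype B] [AddCommGroup M] [Module R M]
    (f : (B →₀ R) →ₗ[R] M) (hf : Function.Surjective f) (hker : ∀ z, f z = 0 → ∀ e, z e ∈ m)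
    (hF : ∀ i < n, Subsingleton (Ext (ModuleCat.of R (R ⧸ m)) (ModuleCat.of R (B →₀ R)) i))
    (h : ExtPat (ModuleCat.of R (R ⧸ m)) n s (LinearMap.ker f)) :
    ExtPat (ModuleCat.of R (R ⧸ m)) n (s + 1) M := by
  have hS := LinearMap.shortExact_shortComplexKer hf
  have hnon := h.non
  rw [not_subsingleton_iff_nontrivial] at hnon
  obtain ⟨x, hx⟩ := exists_ne (0 : Ext (ModuleCat.of R (R ⧸ m)) (ModuleCat.of R (LinearMap.ker f)) (n - s))
  have hx0 : x.comp (Ext.mk₀ f.shortComplexKer.f) (add_zero (n - s)) = 0 := by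
    by_cases hs : s = 0
    · obtain ⟨u⟩ := h.iso hs
      have hsum : f.shortComplexKer.f = ∑ e : B, ((u.symm 1 : LinearMap.ker f) : B →₀ R) e •
          (ModuleCat.ofHom (Finsupp.lsingle e ∘ₗ u.toLinearMap) : ModuleCat.of R (LinearMap.ker f) ⟶ ModuleCat.of R (B →₀ R)) := by
        refine ModuleCat.hom_ext (LinearMap.ext fun z => ?_)
        change LinearMap.ker f at z
        have hz : z = (u z) • u.symm 1 := by
          rw [← map_smul, smul_eq_mul, mul_one, LinearEquiv.symm_apply_apply]
        rw [ModuleCat.hom_sum, LinearMap.sum_apply]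
        have hz2 : (z : B →₀ R) = u z • ((u.symm 1 : LinearMap.ker f) : B →₀ R) := congrArg Subtype.val hz
        change (z : B →₀ R) = ∑ e : B, ((u.symm 1 : LinearMap.ker f) : B →₀ R) e • Finsupp.single e (u z)
        rw [hz2]
        classical
        ext b
        simp [Finsupp.finsetSum_apply, Finsupp.single_apply, mul_comm]
      rw [hsum, Ext.mk₀_sum, Ext.comp_sum]
      refine Finset.sum_eq_zero fun e _ => ?_
      rw [Ext.mk₀_smul, Ext.comp_smul]
      exact ext_smul_zero _ (hker _ (u.symm 1).2 e) _ _ _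
    · have := hF (n - s) (by have := h.le; omega)
      exact Subsingleton.elim _ _
  have hpos : n - s ≠ 0 := by
    intro h0
    have := hS.mono_f
    apply hx
    revert x
    rw [h0]
    intro x hx hx0
    exact Ext.postcomp_mk₀_injective_of_mono _ f.shortComplexKer.f (by simpa using hx0)
  obtain ⟨y, hy⟩ := Ext.covariant_sequence_exact₁ _ hS x hx0 (n₀ := n - (s + 1)) (by omega)
  refine ⟨by omega, ?_, ?_, by omega⟩
  · intro i hi
    have h1 := h.van (i + 1) (by omega)
    have h2 := hF i (by omega)
    have key : ∀ z : Ext (ModuleCat.of R (R ⧸ m)) (ModuleCat.of R M) i, z = 0 := by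
      intro z
      obtain ⟨t, ht⟩ := Ext.covariant_sequence_exact₃ _ hS z rfl (Subsingleton.elim (α := Ext _ (ModuleCat.of R (LinearMap.ker f)) (i + 1)) _ _)
      have : t = 0 := Subsingleton.elim (α := Ext _ (ModuleCat.of R (B →₀ R)) i) _ _
      rw [← ht, this, Ext.zero_comp]
    exact ⟨fun a b => by rw [key a, key b]⟩
  · intro hc
    have : y = 0 := Subsingleton.elim (α := Ext _ (ModuleCat.of R M) _) _ _
    apply hx
    rw [← hy, this, Ext.zero_comp]

lemma ext_chain {m I : Ideal R} (F : PreRes R m I) (n : ℕ)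
    (hF : ∀ (B : Type) [Fintype B], ∀ i < n, Subsingleton (Ext (ModuleCat.of R (R ⧸ m)) (ModuleCat.of R (B →₀ R)) i))
    (k : ℕ) : ∀ t, ExtPat (ModuleCat.of R (R ⧸ m)) n t (LinearMap.range (Finsupp.linearCombination R (F.D k))) →
      ExtPat (ModuleCat.of R (R ⧸ m)) n (t + k + 1) (R ⧸ I) := by
  induction k with
  | zero =>
    intro t h
    rw [F.hexact0] at h
    exact ext_step _ F.surj0 (fun z hz e => F.range_mem 0 z (by rw [F.hexact0]; exact hz) e) (hF _) h
  | succ k ih =>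
    intro t h
    rw [F.hexact, ← LinearMap.ker_rangeRestrict] at h
    have := ih (t + 1) (ext_step _ (LinearMap.surjective_rangeRestrict _)
      (fun z hz e => F.range_mem (k + 1) z (by rw [F.hexact]; simpa [Subtype.ext_iff] using hz) e) (hF _) h)
    have e : t + (k + 1) + 1 = t + 1 + k + 1 := by omega
    rw [e]; exact this

lemma ext_top {m I : Ideal R} (F : PreRes R m I) (n g : ℕ)
    (hF : ∀ (B : Type) [Fintype B], ∀ i < n, Subsingleton (Ext (ModuleCat.of R (R ⧸ m)) (ModuleCat.of R (B →₀ R)) i))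
    (hR : ExtPat (ModuleCat.of R (R ⧸ m)) n 0 R)
    (hg : Fintype.card (F.B g) = 1) (hg' : Fintype.card (F.B (g + 1)) = 0) :
    ExtPat (ModuleCat.of R (R ⧸ m)) n g (R ⧸ I) := by
  have hempty : IsEmpty (F.B (g + 1)) := Fintype.card_eq_zero_iff.1 hg'
  have hbot : LinearMap.range (Finsupp.linearCombination R (F.D g)) = ⊥ := by
    rw [LinearMap.range_eq_bot]
    ext e
    exact hempty.elim e
  obtain ⟨e0, he0⟩ := Fintype.card_eq_one_iff.1 hg
  let _ : Unique (F.B g) := ⟨⟨e0⟩, he0⟩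
  have e1 : (F.B g →₀ R) ≃ₗ[R] R := Finsupp.uniqueLinearEquiv R R e0
  cases g with
  | zero =>
    rw [F.hexact0] at hbot
    have e2 := LinearEquiv.ofBijective _ ⟨LinearMap.ker_eq_bot.1 hbot, F.surj0⟩
    exact hR.congr (e1.symm.trans e2)
  | succ k =>
    rw [F.hexact] at hbot
    have e2 := LinearEquiv.ofInjective _ (LinearMap.ker_eq_bot.1 hbot)
    have := ext_chain F n hF k 0 (hR.congr (e1.symm.trans e2))
    rwa [zero_add] at this

lemma length_le_supportDim [IsNoetherianRing R] (M : Type) [AddCommGroup M] [Module R M] [Module.Finite R M] (rs : List R)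
    (h : IsRegular M rs) : (rs.length : WithBot ℕ∞) ≤ Module.supportDim R M := by
  induction rs generalizing M with
  | nil =>
    have := h.nontrivial
    have h2 := Module.supportDim_ne_bot_of_nontrivial R M
    obtain ⟨d, hd⟩ := WithBot.ne_bot_iff_exists.1 h2
    rw [← hd]
    exact_mod_cast (bot_le : (⊥ : ℕ∞) ≤ d)
  | cons a rs ih =>
    rw [isRegular_cons_iff] at h
    have h1 := ih (QuotSMulTop a M) h.2
    have h2 := Module.supportDim_quotSMulTop_succ_le_of_notMem_minimalPrimes (R := R) (M := M) (x := a)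
      (fun _ => h.1.notMem_of_mem_minimalPrimes)
    refine le_trans ?_ h2
    rw [List.length_cons, Nat.cast_add, Nat.cast_one]
    gcongr

end DepthPart

section DepthPoly
open CategoryTheory CategoryTheory.Abelian RingTheory.Sequence
variable {K : Type} [Field K] {n : ℕ}

lemma mem_mIdeal_iff (p : MvPolynomial (Fin n) K) : p ∈ mIdeal K n ↔ constantCoeff p = 0 := by
  constructor
  · intro hp
    have : mIdeal K n ≤ RingHom.ker (constantCoeff : MvPolynomial (Fin n) K →+* K) := by
      rw [mIdeal, Ideal.span_le]
      rintro _ ⟨i, rfl⟩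
      simp [RingHom.mem_ker]
    exact this hp
  · intro h
    exact mem_mIdeal_of_coeff p h

lemma mIdeal_eq_ker : mIdeal K n = RingHom.ker (constantCoeff : MvPolynomial (Fin n) K →+* K) := by
  ext p; rw [mem_mIdeal_iff, RingHom.mem_ker]

lemma mIdeal_isMaximal : (mIdeal K n).IsMaximal := by
  rw [mIdeal_eq_ker]
  exact RingHom.ker_isMaximal_of_surjective _ (fun a => ⟨C a, by simp⟩)

lemma mIdeal_ne_top : mIdeal K n ≠ ⊤ := mIdeal_isMaximal.ne_top

lemma ofList_take (i : ℕ) : Ideal.ofList ((List.ofFn (X : Fin n → MvPolynomial (Fin n) K)).take i) =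
    Ideal.span (X '' {j : Fin n | (j : ℕ) < i}) := by
  rw [Ideal.ofList]
  congr 1
  ext p
  simp only [Set.mem_ofPred_eq, Set.mem_image, List.mem_take_iff_getElem, List.getElem_ofFn, List.length_ofFn]
  constructor
  · rintro ⟨j, hj, rfl⟩
    exact ⟨⟨j, by omega⟩, by simp; omega, rfl⟩
  · rintro ⟨j, hj, rfl⟩
    exact ⟨j, by have := j.2; omega, rfl⟩

lemma weaklyRegular_X : IsWeaklyRegular (MvPolynomial (Fin n) K) (List.ofFn (X : Fin n → MvPolynomial (Fin n) K)) := by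
  rw [isWeaklyRegular_iff]
  intro i hi
  rw [isSMulRegular_quotient_iff_mem_of_smul_mem]
  intro x hx
  rw [smul_eq_mul, Ideal.mul_top, ofList_take] at hx ⊢
  rw [mem_ideal_span_X_image] at hx ⊢
  rw [List.length_ofFn] at hi
  intro m hm
  simp only [List.getElem_ofFn, smul_eq_mul] at hx
  obtain ⟨j, hj, hj'⟩ := hx (Finsupp.single ⟨i, hi⟩ 1 + m) (by
    rw [mem_support_iff, coeff_X_mul]
    exact mem_support_iff.1 hm)
  refine ⟨j, hj, ?_⟩
  have : (⟨i, hi⟩ : Fin n) ≠ j := by rintro rfl; simp at hj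
  simpa [Finsupp.single_apply, this] using hj'

lemma supp_kappa : Module.support (MvPolynomial (Fin n) K) (ModuleCat.of (MvPolynomial (Fin n) K) (MvPolynomial (Fin n) K ⧸ mIdeal K n)) = PrimeSpectrum.zeroLocus (mIdeal K n) := by
  change Module.support (MvPolynomial (Fin n) K) (MvPolynomial (Fin n) K ⧸ mIdeal K n) = _
  rw [Module.support_eq_zeroLocus, Ideal.annihilator_quotient]

lemma free_smul_lt (B : Type) [Nonempty B] :
    mIdeal K n • (⊤ : Submodule (MvPolynomial (Fin n) K) (B →₀ MvPolynomial (Fin n) K)) < ⊤ := by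
  rw [lt_top_iff_ne_top]
  intro h
  obtain ⟨b⟩ := ‹Nonempty B›
  have h1 : Finsupp.single b (1 : MvPolynomial (Fin n) K) ∈ mIdeal K n • (⊤ : Submodule (MvPolynomial (Fin n) K) (B →₀ MvPolynomial (Fin n) K)) := by
    rw [h]; trivial
  have h2 : mIdeal K n • (⊤ : Submodule (MvPolynomial (Fin n) K) (B →₀ MvPolynomial (Fin n) K)) ≤
      Submodule.comap (Finsupp.lapply b) (mIdeal K n) := by
    rw [Submodule.smul_le]
    intro r hr z _
    simpa using Ideal.mul_mem_right _ _ hr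
  have h3 := h2 h1
  simp only [Submodule.mem_comap, Finsupp.lapply_apply, Finsupp.single_eq_same] at h3
  exact mIdeal_ne_top ((Ideal.eq_top_iff_one _).2 h3)

lemma free_ext (B : Type) [Fintype B] : ∀ i < n, Subsingleton (Ext
    (ModuleCat.of (MvPolynomial (Fin n) K) (MvPolynomial (Fin n) K ⧸ mIdeal K n))
    (ModuleCat.of (MvPolynomial (Fin n) K) (B →₀ MvPolynomial (Fin n) K)) i) := by
  intro i hi
  rcases isEmpty_or_nonempty B with hB | hB
  · have h0 : 𝟙 (ModuleCat.of (MvPolynomial (Fin n) K) (B →₀ MvPolynomial (Fin n) K)) = 0 := by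
      refine ModuleCat.hom_ext (LinearMap.ext fun y => Subsingleton.elim (α := B →₀ MvPolynomial (Fin n) K) _ _)
    refine ⟨fun x y => ?_⟩
    rw [← x.comp_mk₀_id, ← y.comp_mk₀_id, h0]
    simp
  · have hw : IsWeaklyRegular (B →₀ MvPolynomial (Fin n) K) (List.ofFn (X : Fin n → MvPolynomial (Fin n) K)) := by
      have := (weaklyRegular_X (K := K) (n := n)).isWeaklyRegular_lTensor (M₂ := B →₀ MvPolynomial (Fin n) K)
      exact (LinearEquiv.isWeaklyRegular_congr (TensorProduct.rid _ _) _).1 this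
    have hmem : ∀ r ∈ List.ofFn (X : Fin n → MvPolynomial (Fin n) K), r ∈ mIdeal K n := by
      intro r hr
      rw [List.mem_ofFn] at hr
      exact Ideal.subset_span hr
    have hlt := free_smul_lt (K := K) (n := n) B
    have hreg : IsRegular (B →₀ MvPolynomial (Fin n) K) (List.ofFn (X : Fin n → MvPolynomial (Fin n) K)) := by
      refine ⟨hw, ?_⟩
      intro h
      refine hlt.not_ge (h.le.trans ?_)
      exact Submodule.smul_mono_left (Ideal.span_le.2 hmem)
    exact ModuleCat.subsingleton_ext_of_exists_isRegular (mIdeal K n) _ supp_kappa.le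
      (ModuleCat.of _ (B →₀ MvPolynomial (Fin n) K)) hlt _ hmem hreg i (by simpa using hi)

lemma quot_smul_lt {I : Ideal (MvPolynomial (Fin n) K)} (hI : I ≤ mIdeal K n) :
    mIdeal K n • (⊤ : Submodule (MvPolynomial (Fin n) K) (MvPolynomial (Fin n) K ⧸ I)) < ⊤ := by
  rw [lt_top_iff_ne_top]
  intro h
  have h2 : mIdeal K n • (⊤ : Submodule (MvPolynomial (Fin n) K) (MvPolynomial (Fin n) K ⧸ I)) ≤
      Submodule.map (Submodule.mkQ I) (mIdeal K n) := by
    rw [Submodule.smul_le]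
    intro r hr z _
    obtain ⟨z, rfl⟩ := Submodule.mkQ_surjective _ z
    exact ⟨r * z, Ideal.mul_mem_right _ _ hr, by simp [← smul_eq_mul]⟩
  rw [h] at h2
  obtain ⟨y, hy, hy'⟩ := h2 (show Submodule.mkQ I 1 ∈ ⊤ from trivial)
  have : y - 1 ∈ I := by
    rw [← Submodule.Quotient.mk_eq_zero I, Submodule.Quotient.mk_sub]
    exact sub_eq_zero.2 hy'
  apply mIdeal_ne_top (K := K) (n := n)
  rw [Ideal.eq_top_iff_one]
  have := sub_mem hy (hI this)
  simpa using this

lemma extPat_R : ExtPat (ModuleCat.of (MvPolynomial (Fin n) K) (MvPolynomial (Fin n) K ⧸ mIdeal K n)) n 0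
    (MvPolynomial (Fin n) K) := by
  have hvan : ∀ i < n, Subsingleton (Ext
    (ModuleCat.of (MvPolynomial (Fin n) K) (MvPolynomial (Fin n) K ⧸ mIdeal K n))
    (ModuleCat.of (MvPolynomial (Fin n) K) (MvPolynomial (Fin n) K)) i) := fun i hi =>
    ext_subsingleton_congr (Finsupp.uniqueLinearEquiv _ _ ()).symm i (free_ext Unit i hi)
  refine ⟨Nat.zero_le _, by simpa using hvan, ?_, fun _ => ⟨LinearEquiv.refl _ _⟩⟩
  intro hc
  have hlt : mIdeal K n • (⊤ : Submodule (MvPolynomial (Fin n) K) (MvPolynomial (Fin n) K)) < ⊤ := by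
    rw [smul_eq_mul, Ideal.mul_top]
    exact lt_top_iff_ne_top.2 mIdeal_ne_top
  obtain ⟨rs, h1, h2, h3⟩ := ModuleCat.exists_isRegular_of_exists_subsingleton_ext (mIdeal K n) (n + 1)
    (ModuleCat.of _ (MvPolynomial (Fin n) K)) hlt _ supp_kappa (by
      intro i hi
      rcases Nat.lt_succ_iff_lt_or_eq.1 hi with h | rfl
      · exact hvan i h
      · exact hc)
  have h4 := length_le_supportDim (MvPolynomial (Fin n) K) rs h3
  rw [Module.supportDim_self_eq_ringKrullDim, MvPolynomial.ringKrullDim_of_isNoetherianRing, h1,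
    ringKrullDim_eq_zero_of_field, zero_add, Nat.card_eq_fintype_card, Fintype.card_fin] at h4
  have h5 : n + 1 ≤ n := by exact_mod_cast h4
  omega

lemma depth_eq {I : Ideal (MvPolynomial (Fin n) K)} (hI : I ≤ mIdeal K n) {g : ℕ}
    (h : ExtPat (ModuleCat.of (MvPolynomial (Fin n) K) (MvPolynomial (Fin n) K ⧸ mIdeal K n)) n g
      (MvPolynomial (Fin n) K ⧸ I)) : depthQuot K n I = n - g := by
  have hlt := quot_smul_lt hI
  have hset : { k : ℕ | ∃ rs : List (MvPolynomial (Fin n) K), rs.length = k ∧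
    (∀ r ∈ rs, r ∈ mIdeal K n) ∧
    RingTheory.Sequence.IsRegular (MvPolynomial (Fin n) K ⧸ I) rs } = Set.Iic (n - g) := by
    ext k
    constructor
    · rintro ⟨rs, rfl, h1, h2⟩
      by_contra hk
      exact h.non (ModuleCat.subsingleton_ext_of_exists_isRegular (mIdeal K n) _ supp_kappa.le
        (ModuleCat.of _ (MvPolynomial (Fin n) K ⧸ I)) hlt rs h1 h2 _ (by simpa using hk))
    · intro hk
      exact ModuleCat.exists_isRegular_of_exists_subsingleton_ext (mIdeal K n) k
        (ModuleCat.of _ (MvPolynomial (Fin n) K ⧸ I)) hlt _ supp_kappa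
        (fun i hi => h.van i (lt_of_lt_of_le hi hk))
  rw [depthQuot, hset]
  exact csSup_Iic

lemma gor_transfer {q : ℕ} {u u' : Fin q → Fin n →₀ ℕ} (hu : ∀ j, u j ≠ 0) (hu' : ∀ j, u' j ≠ 0)
    (F : MFrame K (Fin n →₀ ℕ) (upSet u)) (F' : MFrame K (Fin n →₀ ℕ) (upSet u'))
    (h0 : ∀ e, F.deg 0 e = 0) (h0' : ∀ e, F'.deg 0 e = 0)
    (hc : ∀ k, Fintype.card (F.B k) = Fintype.card (F'.B k))
    (hd : ringKrullDim (MvPolynomial (Fin n) K ⧸ monIdeal K u) = ringKrullDim (MvPolynomial (Fin n) K ⧸ monIdeal K u'))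
    (h : gorQuot K n (monIdeal K u)) : gorQuot K n (monIdeal K u') := by
  have hle : ∀ {w : Fin q → Fin n →₀ ℕ}, (∀ j, w j ≠ 0) → monIdeal K w ≤ mIdeal K n := by
    intro w hw
    rw [monIdeal, Ideal.span_le]
    rintro _ ⟨j, rfl⟩
    rw [SetLike.mem_coe, mem_mIdeal_iff]
    simp [constantCoeff_monomial, hw j]
  obtain ⟨hcm, M, j₀, h1, h2⟩ := h
  have := mIdeal_isMaximal (K := K) (n := n)
  have hcard : ∀ k, Fintype.card (F.B k) = Fintype.card (M.toPreRes.B k) := fun k =>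
    ((F.toPreRes h0).card_eq M.toPreRes k).1
  have hone : Fintype.card (F.B M.len) = 1 := by rw [hcard]; exact M.card_one j₀ h1 h2
  have hzero : ∀ k, M.len < k → Fintype.card (F.B k) = 0 := fun k hk => by
    rw [hcard]; exact M.card_zero k hk
  have d1 := depth_eq (hle hu) (ext_top (F.toPreRes h0) n M.len free_ext extPat_R hone (hzero _ (Nat.lt_succ_self _)))
  have d2 := depth_eq (hle hu') (ext_top (F'.toPreRes h0') n M.len free_ext extPat_R
    ((hc _).symm.trans hone) ((hc _).symm.trans (hzero _ (Nat.lt_succ_self _))))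
  have hg : ∀ k, M.len < k → IsEmpty (F'.B k) := fun k hk =>
    Fintype.card_eq_zero_iff.1 ((hc k).symm.trans (hzero k hk))
  refine ⟨?_, F'.toMin h0' M.len hg, F'.toMin_rank h0' M.len hg ((hc _).symm.trans hone)⟩
  rw [cmQuot, d2, ← d1, ← hd]
  exact hcm

end DepthPoly

/-- **Signature invariants of monomial ideals** (Theorem: Gorensteinness).
Let `I` be a monomial ideal of `R = K[x_1,…,x_n]` of height at least `2`, with minimal
monomial generating set `G(I) = {x^{v_1},…,x^{v_q}}`.  Then `R/I` is Gorenstein if and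
only if `R/sgn(I)` is Gorenstein. -/
theorem gor_quot_iff_gor_quot_sgn (K : Type) [Field K] (n q : ℕ)
    (v : Fin q → Fin n →₀ ℕ) (hv : AntichainFam v)
    (I : Ideal (MvPolynomial (Fin n) K)) (hI : I = monIdeal K v)
    (hht : (2 : ℕ∞) ≤ heightOf I) :
    gorQuot K n I ↔ gorQuot K n (monIdeal K (sgnExp v)) := by
  subst hI
  have hz := zero_mem_rows v hht
  by_cases hne : ∀ j, v j ≠ 0
  · have hne' : ∀ j, sgnExp v j ≠ 0 := by
      intro j hj
      apply hne j
      ext i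
      by_contra hi
      obtain ⟨k, hk⟩ := hz i
      have h1 := DFunLike.congr_fun hj i
      simp only [sgnExp, Finsupp.equivFunOnFinite_symm_apply_apply, Finsupp.coe_zero, Pi.zero_apply, Finset.card_eq_zero] at h1
      have : (0 : ℕ) ∈ ((Finset.univ.image fun k : Fin q => v k i).filter fun m => m < v j i) := by
        simp only [Finset.mem_filter, Finset.mem_image, Finset.mem_univ, true_and]
        exact ⟨⟨k, hk⟩, Nat.pos_of_ne_zero hi⟩
      rw [h1] at this
      simp at this
    obtain ⟨F, F', h0, h0', hc⟩ := exists_two_frames (K := K) v hz hne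
    have hd := krullDim_eq (K := K) v hz
    exact ⟨gor_transfer hne hne' F F' h0 h0' hc hd,
      gor_transfer hne' hne F' F h0' h0 (fun k => (hc k).symm) hd.symm⟩
  · push Not at hne
    obtain ⟨j, hj⟩ := hne
    have hall : ∀ k, j = k := fun k => hv j k (by rw [hj]; exact bot_le)
    have hs : sgnExp v = v := by
      funext k
      obtain rfl := hall k
      ext i
      rw [hj]
      simp [sgnExp, hj]
    rw [hs]
end
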